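/- arXiv:math/0405124 — 2 statements merged into one kernel-verified Lean document; each statement's English description precedes it below -/
import Mathlib

section
/- Let D be an integral domain and ⋆ a semistar operation on D. The following are equivalent: (1) D is a ⋆-Dedekind domain; (2) D is a ⋆-almost Dedekind domain and D has the ⋆_f-finite character property (every nonzero element of D belongs to only finitely many quasi-⋆_f-maximal ideals); (3) D is a ⋆-Noetherian ⋆-almost Dedekind domain. -/
open scoped Pointwise

section SemistarDefs

variable {D : Type*} [CommRing D] [IsDomain D]
variable {K : Type*} [Field K] [Algebra D K] [IsFractionRing D K]

/-- `star` is a semistar operation on the integral domain `D` with quotient field `K`: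
a map on (nonzero) `D`-submodules of `K` satisfying `(xE)^⋆ = x·E^⋆`, monotonicity,
extensivity and idempotence. -/
structure IsSemistarOperation (star : Submodule D K → Submodule D K) : Prop where
  ne_bot : ∀ {E : Submodule D K}, E ≠ ⊥ → star E ≠ ⊥
  map_smul : ∀ (x : K), x ≠ 0 → ∀ {E : Submodule D K}, E ≠ ⊥ →
    star (Submodule.map (LinearMap.mulLeft D x) E) = Submodule.map (LinearMap.mulLeft D x) (star E)
  mono : ∀ {E F : Submodule D K}, E ≠ ⊥ → F ≠ ⊥ → E ≤ F → star E ≤ star F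
  le_star : ∀ {E : Submodule D K}, E ≠ ⊥ → E ≤ star E
  star_star : ∀ {E : Submodule D K}, E ≠ ⊥ → star (star E) = star E

/-- The image in `K` of an ideal `I` of `D`, as a `D`-submodule of `K`. -/
def idealExt (K : Type*) [Field K] [Algebra D K] (I : Ideal D) : Submodule D K :=
  Submodule.map (Algebra.linearMap D K) I

/-- `I` is a quasi-⋆-ideal: a nonzero ideal of `D` with `I = I^⋆ ∩ D`. -/
def QuasiStarIdeal (star : Submodule D K → Submodule D K) (I : Ideal D) : Prop :=
  I ≠ ⊥ ∧ Submodule.comap (Algebra.linearMap D K) (star (idealExt K I)) = I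

/-- `P` is a quasi-⋆-prime: a prime ideal which is a quasi-⋆-ideal. -/
def QuasiStarPrime (star : Submodule D K → Submodule D K) (P : Ideal D) : Prop :=
  P.IsPrime ∧ QuasiStarIdeal star P

/-- `M` is a quasi-⋆-maximal ideal: maximal in the set of proper quasi-⋆-ideals of `D`. -/
def QuasiStarMaximal (star : Submodule D K → Submodule D K) (M : Ideal D) : Prop :=
  QuasiStarIdeal star M ∧ M ≠ ⊤ ∧
    ∀ J : Ideal D, QuasiStarIdeal star J → J ≠ ⊤ → M ≤ J → J = M

/-- The finite-type semistar operation `⋆_f` associated to `⋆`: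
`E^{⋆_f} = ⋃ { F^⋆ : F nonzero finitely generated, F ⊆ E }`. -/
def finTypeOp (star : Submodule D K → Submodule D K) : Submodule D K → Submodule D K :=
  fun E => ⨆ (F : Submodule D K) (_ : F ≠ ⊥) (_ : F.FG) (_ : F ≤ E), star F

/-- The extension `E·D_Q` of a `D`-submodule `E` of `K` to the localization of `D` at
(the complement of) `Q`, described as `{ x ∈ K : s·x ∈ E for some s ∉ Q }`. -/
def extendToPrime (Q : Ideal D) (E : Submodule D K) : Submodule D K :=
  Submodule.span D {x : K | ∃ s : D, s ∉ Q ∧ algebraMap D K s * x ∈ E}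

/-- The stable semistar operation of finite type `⋆̃` associated to `⋆`:
`E^⋆̃ = ⋂ { E·D_Q : Q a quasi-⋆_f-maximal ideal of D }`. -/
def stableOp (star : Submodule D K → Submodule D K) : Submodule D K → Submodule D K :=
  fun E => ⨅ (Q : Ideal D) (_ : QuasiStarMaximal (finTypeOp star) Q), extendToPrime Q E

/-- A rank-one discrete valuation ring: a (domain which is a) local PID which is not a field. -/
def IsDVR (R : Type*) [CommRing R] : Prop :=
  ∃ h : IsDomain R, @IsDiscreteValuationRing R _ h

/-- A valuation domain. -/
def IsValuationDomain (R : Type*) [CommRing R] : Prop :=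
  ∃ h : IsDomain R, @ValuationRing R _ h

/-- `D` is a ⋆-almost Dedekind domain: `D_M` is a rank-one discrete valuation ring for
every quasi-⋆_f-maximal ideal `M` of `D`. -/
def StarADD (star : Submodule D K → Submodule D K) : Prop :=
  ∀ (M : Ideal D) [M.IsPrime], QuasiStarMaximal (finTypeOp star) M →
    IsDVR (Localization.AtPrime M)

/-- `D` is a Prüfer ⋆-multiplication domain: `D_M` is a valuation domain for every
quasi-⋆_f-maximal ideal `M` of `D`. -/
def StarPMD (star : Submodule D K → Submodule D K) : Prop :=
  ∀ (M : Ideal D) [M.IsPrime], QuasiStarMaximal (finTypeOp star) M →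
    IsValuationDomain (Localization.AtPrime M)

/-- `D` is ⋆-Noetherian: ascending chain condition on quasi-⋆-ideals. -/
def StarNoetherian (star : Submodule D K → Submodule D K) : Prop :=
  ∀ c : ℕ →o Ideal D, (∀ n, QuasiStarIdeal star (c n)) → ∃ n, ∀ m, n ≤ m → c m = c n

/-- `D` is a ⋆-Dedekind domain: ⋆-Noetherian and a P⋆MD. -/
def StarDedekind (star : Submodule D K → Submodule D K) : Prop :=
  StarNoetherian star ∧ StarPMD star

/-- `D` has the ⋆_f-finite character property: every nonzero element of `D` lies in only
finitely many quasi-⋆_f-maximal ideals. -/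
def StarFiniteCharacter (star : Submodule D K → Submodule D K) : Prop :=
  ∀ d : D, d ≠ 0 → {M : Ideal D | QuasiStarMaximal (finTypeOp star) M ∧ d ∈ M}.Finite

/-- The `v`-operation `E ↦ (D : (D : E))`. -/
def vOp : Submodule D K → Submodule D K := fun E => 1 / (1 / E)

/-- A nonzero `D`-submodule `E` of `K` is quasi-∗-invertible if `(E·(D^∗ : E))^∗ = D^∗`. -/
def QuasiStarInvertible (star : Submodule D K → Submodule D K) (E : Submodule D K) : Prop :=
  star (E * (star 1 / E)) = star (1 : Submodule D K)

/-- `D` has the ∗-cancellation law: for nonzero fractional ideals `A`, `B`, `C`,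
`(AB)^∗ = (AC)^∗` implies `B^∗ = C^∗`. -/
def StarCancellation (star : Submodule D K → Submodule D K) : Prop :=
  ∀ A B C : Submodule D K, A ≠ ⊥ → B ≠ ⊥ → C ≠ ⊥ →
    IsFractional (nonZeroDivisors D) A → IsFractional (nonZeroDivisors D) B →
    IsFractional (nonZeroDivisors D) C →
    star (A * B) = star (A * C) → star B = star C

/-- The ∗-dimension of `D`: the supremum of the lengths of chains of quasi-∗-prime ideals
of `D` (between `(0)` and a quasi-∗-prime). -/
noncomputable def starDim (star : Submodule D K → Submodule D K) : ℕ∞ :=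
  ⨆ (k : ℕ) (_ : ∃ c : Fin k → Ideal D, StrictMono c ∧ ∀ i, QuasiStarPrime star (c i)),
    (k : ℕ∞)

/-- A submodule `T` of `K` (containing the image of an integral domain with quotient
field `K`) is integrally closed (in `K`) if every `x ∈ K` satisfying a monic polynomial
equation with coefficients in `T` belongs to `T`. -/
def IntegrallyClosedSub (T : Submodule D K) : Prop :=
  ∀ x : K, (∃ (n : ℕ) (c : Fin n → K), (∀ i, c i ∈ T) ∧
    x ^ n = ∑ i : Fin n, c i * x ^ (i : ℕ)) → x ∈ T

/-- The content ideal `c(p)` of a polynomial: the ideal generated by its coefficients. -/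
def contentIdeal (p : Polynomial D) : Ideal D := Ideal.span (Set.range p.coeff)

/-- The multiplicative set `N(⋆) = { h ∈ D[X] : h ≠ 0, c(h)^⋆ = D^⋆ }` (as a submonoid,
via the closure of this multiplicatively closed set). -/
noncomputable def nagataMonoid (star : Submodule D K → Submodule D K) : Submonoid (Polynomial D) :=
  Submonoid.closure
    {p : Polynomial D | p ≠ 0 ∧ star (idealExt K (contentIdeal p)) = star (1 : Submodule D K)}

/-- The Nagata ring `Na(D,⋆) = D[X]_{N(⋆)}`. -/
abbrev NagataRing (star : Submodule D K → Submodule D K) :=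
  Localization (nagataMonoid star)

/-- `V` is a valuation overring of `D` (inside the quotient field `K`): `D ⊆ V ⊆ K` and
for every nonzero `x ∈ K`, `x ∈ V` or `x⁻¹ ∈ V`. -/
def IsValuationOverring (D : Type*) [CommRing D] {K : Type*} [Field K] [Algebra D K]
    (V : Subring K) : Prop :=
  (∀ d : D, algebraMap D K d ∈ V) ∧ ∀ x : K, x ≠ 0 → (x ∈ V ∨ x⁻¹ ∈ V)

/-- `V` is a ∗-valuation overring of `D`: a valuation overring such that `F^∗ ⊆ FV` for
every nonzero finitely generated `D`-submodule `F` of `K`. -/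
def IsStarValuationOverring (star : Submodule D K → Submodule D K) (V : Subring K) : Prop :=
  IsValuationOverring D V ∧
    ∀ F : Submodule D K, F ≠ ⊥ → F.FG →
      star F ≤ Submodule.span D ((F : Set K) * (V : Set K))

/-- `D` is a Krull domain: there is a family of rank-one discrete valuation overrings of `D`
with quotient field `K` whose intersection is `D`, with finite character. -/
def IsKrullDomain (D : Type*) [CommRing D] (K : Type*) [Field K] [Algebra D K] : Prop :=
  ∃ 𝒱 : Set (Subring K),
    (∀ V ∈ 𝒱, (∀ d : D, algebraMap D K d ∈ V) ∧ IsDVR V ∧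
      ∀ x : K, ∃ a ∈ V, ∃ b ∈ V, b ≠ 0 ∧ x * b = a) ∧
    (⋂ V ∈ 𝒱, (V : Set K)) = Set.range (algebraMap D K) ∧
    ∀ d : D, d ≠ 0 → {V ∈ 𝒱 | ¬ ∃ y ∈ V, algebraMap D K d * y = 1}.Finite

end SemistarDefs


section StarHelpers

set_option linter.unusedSectionVars false

structure COp {D : Type*} [CommRing D] (c : Ideal D → Ideal D) : Prop where
  le : ∀ {I}, I ≠ ⊥ → I ≤ c I
  mono : ∀ {I J}, I ≠ ⊥ → I ≤ J → c I ≤ c J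
  idem : ∀ {I}, I ≠ ⊥ → c (c I) = c I
  mul : ∀ {a x : D} {I}, a ≠ 0 → I ≠ ⊥ → (a * x ∈ c (Ideal.span {a} * I) ↔ x ∈ c I)

def QF {D : Type*} [CommRing D] (c : Ideal D → Ideal D) (I : Ideal D) : Prop :=
  I ≠ ⊥ ∧ ∀ J : Ideal D, J ≠ ⊥ → J.FG → J ≤ I → c J ≤ I

def FM {D : Type*} [CommRing D] (c : Ideal D → Ideal D) (M : Ideal D) : Prop :=
  QF c M ∧ M ≠ ⊤ ∧ ∀ J : Ideal D, QF c J → J ≠ ⊤ → M ≤ J → J = M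

variable {D : Type*} [CommRing D] [IsDomain D] {c : Ideal D → Ideal D}

lemma COp.le_of_le (hc : COp c) {I J : Ideal D} (hI : I ≠ ⊥) (hJ : J ≠ ⊥) (h : I ≤ c J) :
    c I ≤ c J := by
  rw [← hc.idem hJ]; exact hc.mono hI h

lemma ne_bot_of_le' {I J : Ideal D} (hI : I ≠ ⊥) (h : I ≤ J) : J ≠ ⊥ := by
  rintro rfl; exact hI (le_bot_iff.mp h)

lemma fg_split (N : Ideal D) (x : D) (J : Ideal D) (hJ : J.FG) :
    J ≤ N ⊔ Ideal.span {x} → ∃ L : Ideal D, L.FG ∧ L ≤ N ∧ J ≤ L ⊔ Ideal.span {x} := by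
  induction J, hJ using Submodule.fg_induction with
  | singleton y =>
    intro h
    have hy : y ∈ N ⊔ Ideal.span {x} := h (Submodule.mem_span_singleton_self y)
    obtain ⟨n, hn, z, hz, rfl⟩ := Submodule.mem_sup.mp hy
    refine ⟨Ideal.span {n}, Submodule.fg_span_singleton n, by simpa [Ideal.span_le] using hn, ?_⟩
    rw [Submodule.span_singleton_le_iff_mem]
    exact Submodule.add_mem_sup (Ideal.mem_span_singleton_self n) hz
  | sup A B hA hB ihA ihB =>
    intro h
    obtain ⟨L1, f1, l1, m1⟩ := ihA (le_sup_left.trans h)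
    obtain ⟨L2, f2, l2, m2⟩ := ihB (le_sup_right.trans h)
    refine ⟨L1 ⊔ L2, Submodule.FG.sup f1 f2, sup_le l1 l2, sup_le (m1.trans ?_) (m2.trans ?_)⟩
    · exact sup_le_sup_right le_sup_left _
    · exact sup_le_sup_right le_sup_right _

lemma fm_exists (hc : COp c) {I : Ideal D} (hI : I ≠ ⊥)
    (h : ∀ J : Ideal D, J ≠ ⊥ → J.FG → J ≤ I → (1 : D) ∉ c J) : ∃ M, FM c M ∧ I ≤ M := by
  obtain ⟨M, hIM, hM⟩ := zorn_le_nonempty₀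
    {N : Ideal D | ∀ J : Ideal D, J ≠ ⊥ → J.FG → J ≤ N → (1 : D) ∉ c J} (by
      intro C hC hch y hy
      refine ⟨sSup C, ?_, fun z hz => le_sSup hz⟩
      intro J hJ hfg hle
      have hfg' := (Submodule.fg_iff_compact J).mp hfg
      rw [CompleteLattice.isCompactElement_iff_le_of_directed_sSup_le] at hfg'
      obtain ⟨N, hN, hJN⟩ := hfg' C ⟨y, hy⟩ hch.directedOn hle
      exact hC hN J hJ hfg hJN) I h
  have hMb : M ≠ ⊥ := ne_bot_of_le' hI hIM
  refine ⟨M, ⟨⟨hMb, ?_⟩, ?_, ?_⟩, hIM⟩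
  · intro J hJ hfg hle x hx
    have key : M ⊔ Ideal.span {x} ∈
        {N : Ideal D | ∀ J : Ideal D, J ≠ ⊥ → J.FG → J ≤ N → (1 : D) ∉ c J} := by
      intro J' hJ' hfg' hle' h1
      obtain ⟨L, Lf, LM, hL⟩ := fg_split M x J' hfg' hle'
      have hb : J ⊔ L ≠ ⊥ := ne_bot_of_le' hJ le_sup_left
      refine hM.1 (J ⊔ L) hb (Submodule.FG.sup hfg Lf) (sup_le hle LM) ?_
      refine hc.le_of_le hJ' hb (hL.trans (sup_le (le_sup_right.trans (hc.le hb)) ?_)) h1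
      rw [Ideal.span_singleton_le_iff_mem]
      exact hc.mono hJ le_sup_left hx
    exact hM.2 key le_sup_left (Ideal.mem_sup_right (Ideal.mem_span_singleton_self x))
  · rintro rfl
    refine hM.1 ⊤ hMb ?_ le_rfl (hc.le hMb trivial)
    exact ⟨{1}, by simp⟩
  · intro N hN hNt hMN
    refine le_antisymm (hM.2 ?_ hMN) hMN
    intro J hJ hfg hle h1
    exact hNt ((Ideal.eq_top_iff_one _).mpr (hN.2 J hJ hfg hle h1))

/-- if `1 ∈ c J` and `x J ⊆ I`, then `x ∈ I`. -/
lemma qf_mem (hc : COp c) {I J : Ideal D} (hI : QF c I) (hJ : J ≠ ⊥) (hf : J.FG)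
    (h1 : (1 : D) ∈ c J) {x : D} (hx : ∀ y ∈ J, x * y ∈ I) : x ∈ I := by
  by_cases x0 : x = 0
  · simp [x0]
  have : x * 1 ∈ c (Ideal.span {x} * J) := (hc.mul x0 hJ).mpr h1
  rw [mul_one] at this
  refine hI.2 _ ?_ (Ideal.FG.mul (Submodule.fg_span_singleton x) hf) ?_ this
  · simp [x0, hJ]
  · rw [Ideal.span_singleton_mul_le_iff]; exact hx

lemma fm_prime (hc : COp c) {M : Ideal D} (hM : FM c M) : M.IsPrime := by
  refine ⟨hM.2.1, ?_⟩
  intro a b hab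
  by_contra! h
  have : ∃ J : Ideal D, J ≠ ⊥ ∧ J.FG ∧ J ≤ M ⊔ Ideal.span {a} ∧ (1 : D) ∈ c J := by
    by_contra! h'
    obtain ⟨N, hN, hle⟩ := fm_exists hc (ne_bot_of_le' hM.1.1 le_sup_left) h'
    have := hM.2.2 N hN.1 hN.2.1 (le_sup_left.trans hle)
    subst this
    exact h.1 (hle (Ideal.mem_sup_right (Ideal.mem_span_singleton_self a)))
  obtain ⟨J, hJ, hf, hle, h1⟩ := this
  refine h.2 (qf_mem hc hM.1 hJ hf h1 ?_)
  intro y hy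
  obtain ⟨m, hm, z, hz, rfl⟩ := Submodule.mem_sup.mp (hle hy)
  obtain ⟨r, rfl⟩ := Ideal.mem_span_singleton'.mp hz
  rw [mul_add]
  refine M.add_mem (M.mul_mem_left _ hm) ?_
  rw [show b * (r * a) = r * (a * b) by ring]
  exact M.mul_mem_left _ hab

/-- local characterisation of quasi-f-ideals -/
lemma qf_local (hc : COp c) {I : Ideal D} (hI : QF c I) {x : D}
    (h : ∀ M, FM c M → ∃ s, s ∉ M ∧ s * x ∈ I) : x ∈ I := by
  let A : Ideal D := Submodule.comap (LinearMap.mulLeft D x) I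
  have hIA : I ≤ A := fun y hy => I.mul_mem_left x hy
  have : ∃ J : Ideal D, J ≠ ⊥ ∧ J.FG ∧ J ≤ A ∧ (1 : D) ∈ c J := by
    by_contra! h'
    obtain ⟨N, hN, hle⟩ := fm_exists hc (ne_bot_of_le' hI.1 hIA) h'
    obtain ⟨s, hs, hsx⟩ := h N hN
    apply hs
    apply hle
    change x * s ∈ I
    rwa [mul_comm]
  obtain ⟨J, hJ, hf, hle, h1⟩ := this
  exact qf_mem hc hI hJ hf h1 fun y hy => hle hy

lemma loc_mem_iff (M : Ideal D) [M.IsPrime] (I : Ideal D) (x : D) :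
    algebraMap D (Localization.AtPrime M) x ∈ I.map (algebraMap D (Localization.AtPrime M)) ↔
      ∃ s, s ∉ M ∧ s * x ∈ I := by
  rw [IsLocalization.algebraMap_mem_map_algebraMap_iff M.primeCompl]
  rfl

/-- (2) → Noetherian, abstractly -/
lemma noeth_of_local (hc : COp c)
    (hadd : ∀ (M : Ideal D) [M.IsPrime], FM c M → IsDVR (Localization.AtPrime M))
    (hfin : ∀ d : D, d ≠ 0 → {M : Ideal D | FM c M ∧ d ∈ M}.Finite)
    (f : ℕ →o Ideal D) (hf : ∀ n, QF c (f n)) : ∃ n, ∀ m, n ≤ m → f m = f n := by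
  obtain ⟨d, hd, d0⟩ := Submodule.exists_mem_ne_zero_of_ne_bot (hf 0).1
  have h1 : ∀ M : Ideal D, ∃ n, FM c M → ∀ m, n ≤ m → ∀ x ∈ f m, ∃ s, s ∉ M ∧ s * x ∈ f n := by
    intro M
    by_cases hM : FM c M
    · have := fm_prime hc hM
      obtain ⟨_, hdvr⟩ := hadd M hM
      obtain ⟨n, hn⟩ := monotone_stabilizes_iff_noetherian.mpr
        (inferInstance : IsNoetherianRing (Localization.AtPrime M))
        ⟨fun n => (f n).map (algebraMap D (Localization.AtPrime M)),
          fun a b hab => Ideal.map_mono (f.2 hab)⟩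
      refine ⟨n, fun _ m hm x hx => ?_⟩
      rw [← loc_mem_iff]
      have := hn m hm
      change (f n).map _ = (f m).map _ at this
      rw [this]
      exact Ideal.mem_map_of_mem _ hx
    · exact ⟨0, fun h => absurd h hM⟩
  choose g hg using h1
  refine ⟨(hfin d d0).toFinset.sup g, fun m hm => le_antisymm ?_ (f.2 hm)⟩
  intro x hx
  refine qf_local hc (hf _) fun M hM => ?_
  by_cases hdM : d ∈ M
  · have hle : g M ≤ (hfin d d0).toFinset.sup g := Finset.le_sup (by simp [hM, hdM])
    obtain ⟨s, hs, hsx⟩ := hg M hM m (hle.trans hm) x hx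
    exact ⟨s, hs, f.2 hle hsx⟩
  · exact ⟨d, hdM, Ideal.mul_mem_right _ _ (f.2 (Nat.zero_le _) hd)⟩

def NoethC (c : Ideal D → Ideal D) : Prop :=
  ∀ f : ℕ →o Ideal D, (∀ n, f n ≠ ⊥ ∧ c (f n) = f n) → ∃ n, ∀ m, n ≤ m → f m = f n

/-- Under Noetherianity every ideal is contained in the closure of an f.g. subideal. -/
lemma noeth_fg (hc : COp c) (hN : NoethC c) {I : Ideal D} (hI : I ≠ ⊥) :
    ∃ J : Ideal D, J ≠ ⊥ ∧ J.FG ∧ J ≤ I ∧ I ≤ c J := by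
  by_contra! H
  have step : ∀ J : {J : Ideal D // J ≠ ⊥ ∧ J.FG ∧ J ≤ I},
      ∃ J' : {J : Ideal D // J ≠ ⊥ ∧ J.FG ∧ J ≤ I}, J.1 ≤ J'.1 ∧ ¬ J'.1 ≤ c J.1 := by
    rintro ⟨J, hJ, hf, hle⟩
    obtain ⟨x, hx, hxn⟩ := SetLike.not_le_iff_exists.mp (H J hJ hf hle)
    refine ⟨⟨J ⊔ Ideal.span {x}, ne_bot_of_le' hJ le_sup_left,
      Submodule.FG.sup hf (Submodule.fg_span_singleton x),
      sup_le hle (by rwa [Ideal.span_singleton_le_iff_mem])⟩, le_sup_left, ?_⟩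
    exact fun h => hxn (h (Ideal.mem_sup_right (Ideal.mem_span_singleton_self x)))
  choose nx hnx1 hnx2 using step
  obtain ⟨d, hd, d0⟩ := Submodule.exists_mem_ne_zero_of_ne_bot hI
  let J0 : {J : Ideal D // J ≠ ⊥ ∧ J.FG ∧ J ≤ I} :=
    ⟨Ideal.span {d}, by simpa using d0, Submodule.fg_span_singleton d,
      by rwa [Ideal.span_singleton_le_iff_mem]⟩
  let s : ℕ → {J : Ideal D // J ≠ ⊥ ∧ J.FG ∧ J ≤ I} := fun n => nx^[n] J0
  have hs : ∀ n, s (n + 1) = nx (s n) := fun n => Function.iterate_succ_apply' nx n J0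
  obtain ⟨n, hn⟩ := hN ⟨fun n => c (s n).1, monotone_nat_of_le_succ fun n => by
      rw [hs]; exact hc.mono (s n).2.1 (hnx1 _)⟩
    (fun n => ⟨ne_bot_of_le' (s n).2.1 (hc.le (s n).2.1), hc.idem (s n).2.1⟩)
  have := hn (n + 1) (Nat.le_succ n)
  simp only [OrderHom.coe_mk] at this
  refine hnx2 (s n) ?_
  rw [← this, ← hs]
  exact hc.le (s (n + 1)).2.1

lemma val_dvd (M : Ideal D) [M.IsPrime] (hv : IsValuationDomain (Localization.AtPrime M))
    (a b : D) : ∃ s, s ∉ M ∧ (a ∣ s * b ∨ b ∣ s * a) := by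
  obtain ⟨_, hv⟩ := hv
  have key : ∀ a b : D, algebraMap D (Localization.AtPrime M) a ∣
      algebraMap D (Localization.AtPrime M) b → ∃ s, s ∉ M ∧ a ∣ s * b := by
    intro a b h
    rw [← Ideal.mem_span_singleton, ← Set.image_singleton, ← Ideal.map_span, loc_mem_iff] at h
    simpa only [Ideal.mem_span_singleton] using h
  rcases ValuationRing.dvd_total (algebraMap D (Localization.AtPrime M) a)
    (algebraMap D (Localization.AtPrime M) b) with h | h
  · obtain ⟨s, hs, h⟩ := key _ _ h; exact ⟨s, hs, Or.inl h⟩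
  · obtain ⟨s, hs, h⟩ := key _ _ h; exact ⟨s, hs, Or.inr h⟩

lemma val_fg (M : Ideal D) [hp : M.IsPrime] (hv : IsValuationDomain (Localization.AtPrime M))
    (J : Ideal D) (hJ : J.FG) : ∃ a ∈ J, ∃ s, s ∉ M ∧ ∀ x ∈ J, a ∣ s * x := by
  induction J, hJ using Submodule.fg_induction with
  | singleton y =>
    refine ⟨y, Submodule.mem_span_singleton_self y, 1, hp.one_notMem, fun x hx => ?_⟩
    rw [one_mul]; exact Ideal.mem_span_singleton.mp hx
  | sup A B hA hB ihA ihB =>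
    obtain ⟨a, ha, s, hs, h⟩ := ihA
    obtain ⟨b, hb, t, ht, h'⟩ := ihB
    obtain ⟨u, hu, hd⟩ := val_dvd M hv a b
    have hstu : u * s * t ∉ M :=
      hp.mul_notMem (hp.mul_notMem hu hs) ht
    rcases hd with hd | hd
    · refine ⟨a, Ideal.mem_sup_left ha, _, hstu, fun x hx => ?_⟩
      obtain ⟨p, hp, q, hq, rfl⟩ := Submodule.mem_sup.mp hx
      obtain ⟨k, hk⟩ := h p hp
      obtain ⟨l, hl⟩ := h' q hq
      obtain ⟨w, hw⟩ := hd
      exact ⟨u * t * k + s * l * w, by linear_combination u * t * hk + u * s * hl + s * l * hw⟩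
    · refine ⟨b, Ideal.mem_sup_right hb, _, hstu, fun x hx => ?_⟩
      obtain ⟨p, hp, q, hq, rfl⟩ := Submodule.mem_sup.mp hx
      obtain ⟨k, hk⟩ := h p hp
      obtain ⟨l, hl⟩ := h' q hq
      obtain ⟨w, hw⟩ := hd
      exact ⟨u * s * l + t * k * w, by linear_combination u * t * hk + u * s * hl + t * k * hw⟩

lemma span_ne_bot {a : D} (ha : a ≠ 0) : Ideal.span {a} ≠ ⊥ := by simpa using ha

/-- `x ∈ (aD)^*` implies `x ∈ aD_M`. -/
lemma val_closure (hc : COp c) (M : Ideal D) [hp : M.IsPrime] (hM : FM c M)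
    (hv : IsValuationDomain (Localization.AtPrime M)) {a x : D} (ha : a ≠ 0)
    (hx : x ∈ c (Ideal.span {a})) : ∃ t, t ∉ M ∧ a ∣ t * x := by
  by_cases x0 : x = 0
  · exact ⟨1, hp.one_notMem, by simp [x0]⟩
  obtain ⟨t, ht, h | ⟨e, he⟩⟩ := val_dvd M hv a x
  · exact ⟨t, ht, h⟩
  by_cases heM : e ∈ M
  · exfalso
    have t0 : t ≠ 0 := by rintro rfl; exact ht M.zero_mem
    have e0 : e ≠ 0 := by
      rintro rfl; rw [mul_zero] at he; exact mul_ne_zero t0 ha he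
    have h1 : e * x ∈ c (Ideal.span {e} * Ideal.span {a}) :=
      (hc.mul e0 (span_ne_bot ha)).mpr hx
    rw [mul_comm (Ideal.span {e}), mul_comm e x, ← he, mul_comm t a,
      hc.mul ha (span_ne_bot e0)] at h1
    refine ht (hM.1.2 _ (span_ne_bot e0) (Submodule.fg_span_singleton e) ?_ h1)
    rwa [Ideal.span_singleton_le_iff_mem]
  · exact ⟨e, heM, t, by rw [mul_comm e x, ← he, mul_comm]⟩

lemma noeth_dvr (hc : COp c) (hN : NoethC c) (M : Ideal D) [hp : M.IsPrime] (hM : FM c M)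
    (hv : IsValuationDomain (Localization.AtPrime M)) : IsDVR (Localization.AtPrime M) := by
  have hdom : IsDomain (Localization.AtPrime M) := hv.1
  have hpir : IsPrincipalIdealRing (Localization.AtPrime M) := by
    refine ⟨fun N => ?_⟩
    set I := N.comap (algebraMap D (Localization.AtPrime M)) with hIdef
    have hmap : I.map (algebraMap D (Localization.AtPrime M)) = N :=
      IsLocalization.map_under M.primeCompl _ N
    by_cases hI : I = ⊥
    · rw [← hmap, hI, Ideal.map_bot]; infer_instance
    obtain ⟨J, hJ, hf, hle, hcl⟩ := noeth_fg hc hN hI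
    obtain ⟨a, haJ, s, hs, h⟩ := val_fg M hv J hf
    have s0 : s ≠ 0 := by rintro rfl; exact hs M.zero_mem
    have a0 : a ≠ 0 := by
      rintro rfl
      obtain ⟨d, hd, d0⟩ := Submodule.exists_mem_ne_zero_of_ne_bot hJ
      exact mul_ne_zero s0 d0 (zero_dvd_iff.mp (h d hd))
    refine ⟨algebraMap D _ a, ?_⟩
    change N = Ideal.span {algebraMap D _ a}
    rw [← hmap, ← Set.image_singleton, ← Ideal.map_span]
    refine le_antisymm ?_ (Ideal.map_mono (by
      rw [Ideal.span_singleton_le_iff_mem]; exact hle haJ))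
    rw [Ideal.map_le_iff_le_comap]
    intro x hx
    rw [Ideal.mem_comap, loc_mem_iff]
    have h1 : s * x ∈ c (Ideal.span {s} * J) := (hc.mul s0 hJ).mpr (hcl hx)
    have h2 : s * x ∈ c (Ideal.span {a}) := by
      refine hc.mono ?_ ?_ h1
      · simp [s0, hJ]
      · rw [Ideal.span_singleton_mul_le_iff]
        exact fun y hy => Ideal.mem_span_singleton.mpr (h y hy)
    obtain ⟨t, ht, h3⟩ := val_closure hc M hM hv a0 h2
    exact ⟨t * s, hp.mul_notMem ht hs,
      Ideal.mem_span_singleton.mpr (by rwa [mul_assoc])⟩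
  refine ⟨hdom, { hpir, (inferInstance : IsLocalRing (Localization.AtPrime M)) with
    not_a_field' := ?_ }⟩
  rw [← Localization.AtPrime.map_eq_maximalIdeal]
  intro h
  refine hM.1.1 ?_
  rw [Ideal.map_eq_bot_iff_of_injective] at h
  · exact h
  · exact IsLocalization.injective _ M.primeCompl_le_nonZeroDivisors

lemma sep (hc : COp c) (hN : NoethC c) (M : Ideal D) [hp : M.IsPrime] (hM : FM c M)
    (hv : IsDVR (Localization.AtPrime M)) {d : D} (d0 : d ≠ 0) :
    ∃ s, s ∉ M ∧ ∀ M', FM c M' → d ∈ M' → M' ≠ M → s ∈ M' := by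
  obtain ⟨hdom, hdvr⟩ := hv
  obtain ⟨J, hJ, hf, hle, hcl⟩ := noeth_fg hc hN hM.1.1
  obtain ⟨π, hπ⟩ := IsDiscreteValuationRing.exists_irreducible (Localization.AtPrime M)
  have hd0 : algebraMap D (Localization.AtPrime M) d ≠ 0 := by
    intro h
    exact d0 (IsLocalization.injective _ M.primeCompl_le_nonZeroDivisors (by rw [h, map_zero]))
  obtain ⟨e, he⟩ := IsDiscreteValuationRing.ideal_eq_span_pow_irreducible
    (s := Ideal.span {algebraMap D (Localization.AtPrime M) d}) (by simpa using hd0) hπ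
  have hJe : ∀ x ∈ J ^ e, ∃ s, s ∉ M ∧ s * x ∈ Ideal.span {d} := by
    intro x hx
    rw [← loc_mem_iff, Ideal.map_span, Set.image_singleton, he, ← Ideal.span_singleton_pow,
      ← (IsDiscreteValuationRing.irreducible_iff_uniformizer π).mp hπ,
      ← Localization.AtPrime.map_eq_maximalIdeal, ← Ideal.map_pow]
    exact Ideal.mem_map_of_mem _ (Ideal.pow_right_mono hle e hx)
  have hfe : (J ^ e).FG := Ideal.FG.pow hf
  obtain ⟨s, hs, hse⟩ : ∃ s, s ∉ M ∧ ∀ x ∈ J ^ e, s * x ∈ Ideal.span {d} := by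
    generalize J ^ e = L at hfe hJe
    induction L, hfe using Submodule.fg_induction with
    | singleton y =>
      obtain ⟨s, hs, h⟩ := hJe y (Submodule.mem_span_singleton_self y)
      refine ⟨s, hs, fun x hx => ?_⟩
      obtain ⟨r, rfl⟩ := Ideal.mem_span_singleton'.mp hx
      rw [mul_left_comm]
      exact Ideal.mul_mem_left _ _ h
    | sup A B hA hB ihA ihB =>
      obtain ⟨s, hs, h⟩ := ihA fun x hx => hJe x (Ideal.mem_sup_left hx)
      obtain ⟨t, ht, h'⟩ := ihB fun x hx => hJe x (Ideal.mem_sup_right hx)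
      refine ⟨s * t, hp.mul_notMem hs ht, fun x hx => ?_⟩
      obtain ⟨p, hp, q, hq, rfl⟩ := Submodule.mem_sup.mp hx
      rw [show s * t * (p + q) = t * (s * p) + s * (t * q) by ring]
      exact Ideal.add_mem _ (Ideal.mul_mem_left _ _ (h p hp)) (Ideal.mul_mem_left _ _ (h' q hq))
  refine ⟨s, hs, fun M' hM' hd hne => ?_⟩
  have hp' := fm_prime hc hM'
  have hJM : ¬ J ≤ M' := by
    intro h
    exact hne (hM.2.2 M' hM'.1 hM'.2.1 (hcl.trans (hM'.1.2 J hJ hf h)))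
  have hJeM : ¬ J ^ e ≤ M' := fun h => hJM (hp'.le_of_pow_le h)
  obtain ⟨x, hx, hxn⟩ := SetLike.not_le_iff_exists.mp hJeM
  have : s * x ∈ M' := (Ideal.span_singleton_le_iff_mem _).mpr hd (hse x hx)
  exact (hp'.mem_or_mem this).resolve_right hxn

lemma noeth_finchar (hc : COp c) (hN : NoethC c)
    (hadd : ∀ (M : Ideal D) [M.IsPrime], FM c M → IsDVR (Localization.AtPrime M))
    (d : D) (d0 : d ≠ 0) : {M : Ideal D | FM c M ∧ d ∈ M}.Finite := by
  by_contra hinf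
  let g := Set.Infinite.natEmbedding _ hinf
  let f : ℕ →o Ideal D := ⟨fun n => ⨅ k : {k // n ≤ k}, (g k.1).1, fun n m hnm =>
    le_iInf fun k => iInf_le (fun k : {k // n ≤ k} => (g k.1).1) ⟨k.1, hnm.trans k.2⟩⟩
  have hfd : ∀ n, d ∈ f n := fun n => by
    change d ∈ ⨅ k : {k // n ≤ k}, (g k.1).1
    rw [Ideal.mem_iInf]
    exact fun k => (g k.1).2.2
  have hfb : ∀ n, f n ≠ ⊥ := fun n h => d0 (by have := hfd n; rw [h] at this; simpa using this)
  obtain ⟨n, hn⟩ := hN f (fun n => ⟨hfb n, by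
    refine le_antisymm (le_iInf fun k => ?_) (hc.le (hfb n))
    obtain ⟨J, hJ, hf, hle, hcl⟩ := noeth_fg hc hN (hfb n)
    refine (hc.le_of_le (hfb n) hJ hcl).trans ((g k.1).2.1.1.2 J hJ hf (hle.trans ?_))
    exact iInf_le (fun k : {k // n ≤ k} => (g k.1).1) k⟩)
  have hM := (g n).2.1
  have := fm_prime hc hM
  obtain ⟨s, hs, hs'⟩ := sep hc hN (g n).1 hM (hadd _ hM) d0
  have h1 : s ∈ f (n + 1) := by
    change s ∈ ⨅ k : {k // n + 1 ≤ k}, (g k.1).1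
    rw [Ideal.mem_iInf]
    intro k
    refine hs' _ (g k.1).2.1 (g k.1).2.2 fun h => ?_
    have : k.1 = n := g.injective (Subtype.ext h)
    have := k.2
    omega
  rw [hn (n + 1) (Nat.le_succ n)] at h1
  exact hs (iInf_le (fun k : {k // n ≤ k} => (g k.1).1) ⟨n, le_rfl⟩ h1)

variable {K : Type*} [Field K] [Algebra D K] [IsFractionRing D K]

def clo (star : Submodule D K → Submodule D K) (I : Ideal D) : Ideal D :=
  Submodule.comap (Algebra.linearMap D K) (star (idealExt K I))

lemma mem_clo {star : Submodule D K → Submodule D K} {I : Ideal D} {x : D} :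
    x ∈ clo star I ↔ algebraMap D K x ∈ star (idealExt K I) := Iff.rfl

lemma linj : Function.Injective (Algebra.linearMap D K) := IsFractionRing.injective D K

lemma ext_ne_bot {I : Ideal D} (hI : I ≠ ⊥) : idealExt K I ≠ ⊥ := by
  intro h
  exact hI (Submodule.map_injective_of_injective (linj (K := K)) (by rw [Submodule.map_bot]; exact h))

lemma clo_cop {star : Submodule D K → Submodule D K} (h : IsSemistarOperation star) :
    COp (clo star) where
  le := fun {I} hI x hx => h.le_star (ext_ne_bot hI) (Submodule.mem_map_of_mem hx)
  mono := fun {I J} hI hIJ => Submodule.comap_mono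
    (h.mono (ext_ne_bot hI) (ext_ne_bot (ne_bot_of_le' hI hIJ)) (Submodule.map_mono hIJ))
  idem := fun {I} hI => by
    have hle : I ≤ clo star I :=
      fun x hx => h.le_star (ext_ne_bot hI) (Submodule.mem_map_of_mem hx)
    have hb := ne_bot_of_le' hI hle
    refine le_antisymm ?_ (fun x hx => h.le_star (ext_ne_bot hb) (Submodule.mem_map_of_mem hx))
    refine Submodule.comap_mono ?_
    rw [← h.star_star (ext_ne_bot hI)]
    exact h.mono (ext_ne_bot hb) (h.ne_bot (ext_ne_bot hI)) (Submodule.map_comap_le _ _)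
  mul := fun {a x I} ha hI => by
    have ha' : algebraMap D K a ≠ 0 := by
      simpa using ha
    have key : idealExt K (Ideal.span {a} * I) =
        Submodule.map (LinearMap.mulLeft D (algebraMap D K a)) (idealExt K I) := by
      ext y
      simp only [idealExt, Submodule.mem_map, Ideal.mem_span_singleton_mul]
      constructor
      · rintro ⟨_, ⟨z, hz, rfl⟩, rfl⟩
        exact ⟨_, ⟨z, hz, rfl⟩, by simp⟩
      · rintro ⟨_, ⟨z, hz, rfl⟩, rfl⟩
        exact ⟨_, ⟨z, hz, rfl⟩, by simp⟩
    rw [mem_clo, mem_clo, key, h.map_smul _ ha' (ext_ne_bot hI), Submodule.mem_map, map_mul]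
    constructor
    · rintro ⟨y, hy, hyx⟩
      rw [LinearMap.mulLeft_apply] at hyx
      rwa [← mul_left_cancel₀ ha' hyx]
    · exact fun hx => ⟨_, hx, rfl⟩

lemma mem_fin {star : Submodule D K → Submodule D K} (h : IsSemistarOperation star)
    {E : Submodule D K} (hE : E ≠ ⊥) {x : K} :
    x ∈ finTypeOp star E ↔ ∃ F : Submodule D K, F ≠ ⊥ ∧ F.FG ∧ F ≤ E ∧ x ∈ star F := by
  have : finTypeOp star E =
      ⨆ F : {F : Submodule D K // F ≠ ⊥ ∧ F.FG ∧ F ≤ E}, star F.1 := by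
    apply le_antisymm
    · refine iSup_le fun F => iSup_le fun h1 => iSup_le fun h2 => iSup_le fun h3 => ?_
      exact le_iSup (fun F : {F : Submodule D K // F ≠ ⊥ ∧ F.FG ∧ F ≤ E} => star F.1)
        ⟨F, h1, h2, h3⟩
    · refine iSup_le fun F => ?_
      exact le_iSup_of_le F.1 (le_iSup_of_le F.2.1 (le_iSup_of_le F.2.2.1
        (le_iSup_of_le F.2.2.2 le_rfl)))
  rw [this]
  obtain ⟨d, hd, d0⟩ := Submodule.exists_mem_ne_zero_of_ne_bot hE
  have : Nonempty {F : Submodule D K // F ≠ ⊥ ∧ F.FG ∧ F ≤ E} :=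
    ⟨Submodule.span D {d}, by simpa using d0, Submodule.fg_span_singleton d, by
      rwa [Submodule.span_singleton_le_iff_mem]⟩
  rw [Submodule.mem_iSup_of_directed]
  · constructor
    · rintro ⟨⟨F, h1, h2, h3⟩, hx⟩; exact ⟨F, h1, h2, h3, hx⟩
    · rintro ⟨F, h1, h2, h3, hx⟩; exact ⟨⟨F, h1, h2, h3⟩, hx⟩
  · rintro ⟨F, h1, h2, h3⟩ ⟨G, g1, g2, g3⟩
    have hb : F ⊔ G ≠ ⊥ := fun hb => h1 (le_bot_iff.mp (hb ▸ le_sup_left))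
    exact ⟨⟨F ⊔ G, hb, h2.sup g2, sup_le h3 g3⟩, h.mono h1 hb le_sup_left,
      h.mono g1 hb le_sup_right⟩

lemma quasi_fin_iff {star : Submodule D K → Submodule D K} (h : IsSemistarOperation star)
    (I : Ideal D) : QuasiStarIdeal (finTypeOp star) I ↔ QF (clo star) I := by
  refine and_congr_right fun hI => ?_
  constructor
  · intro heq J hJ hf hle x hx
    rw [← heq]
    refine (mem_fin h (ext_ne_bot hI)).mpr ⟨idealExt K J, ext_ne_bot hJ, Submodule.FG.map _ hf,
      Submodule.map_mono hle, hx⟩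
  · intro H
    apply le_antisymm
    · intro x hx
      obtain ⟨F, h1, h2, h3, hx⟩ := (mem_fin h (ext_ne_bot hI)).mp hx
      have hF : idealExt K (Submodule.comap (Algebra.linearMap D K) F) = F := by
        refine Submodule.map_comap_eq_of_le (h3.trans ?_)
        exact LinearMap.map_le_range
      refine H (Submodule.comap (Algebra.linearMap D K) F) ?_ ?_ ?_ ?_
      · intro hb
        rw [hb, idealExt, Submodule.map_bot] at hF
        exact h1 hF.symm
      · refine Submodule.fg_of_fg_map_injective _ (linj (K := K)) ?_
        change (idealExt K _).FG
        rwa [hF]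
      · exact (Submodule.comap_mono h3).trans (Submodule.comap_map_eq_of_injective linj I).le
      · rwa [mem_clo, hF]
    · intro x hx
      by_cases x0 : x = 0
      · simp [x0]
      have hb : idealExt K (Ideal.span {x}) ≠ ⊥ := ext_ne_bot (span_ne_bot x0)
      refine (mem_fin h (ext_ne_bot hI)).mpr ⟨idealExt K (Ideal.span {x}), hb,
        (Submodule.fg_span_singleton x).map _,
        Submodule.map_mono ((Ideal.span_singleton_le_iff_mem _).mpr hx), h.le_star hb ?_⟩
      exact Submodule.mem_map_of_mem (Ideal.mem_span_singleton_self x)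

lemma max_fin_iff {star : Submodule D K → Submodule D K} (h : IsSemistarOperation star)
    (M : Ideal D) : QuasiStarMaximal (finTypeOp star) M ↔ FM (clo star) M := by
  simp only [QuasiStarMaximal, FM, quasi_fin_iff h]

lemma quasi_qf {star : Submodule D K → Submodule D K} (h : IsSemistarOperation star)
    {I : Ideal D} (hI : QuasiStarIdeal star I) : QF (clo star) I := by
  refine ⟨hI.1, fun J hJ _ hle => ((clo_cop h).mono hJ hle).trans ?_⟩
  exact hI.2.le

lemma dvr_val {R : Type*} [CommRing R] (h : IsDVR R) : IsValuationDomain R := by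
  obtain ⟨hd, h⟩ := h
  exact ⟨hd, inferInstance⟩

end StarHelpers

section Statement

variable {D : Type*} [CommRing D] [IsDomain D]
variable {K : Type*} [Field K] [Algebra D K] [IsFractionRing D K]

/-- `D` an integral domain, `⋆` a semistar operation. TFAE:
(1) `D` is a ⋆-Dedekind domain; (2) `D` is a ⋆-almost Dedekind domain with the
⋆_f-finite character property; (3) `D` is a ⋆-Noetherian ⋆-almost Dedekind domain. -/
theorem starDedekind_iff_starADD_finiteCharacter
    (star : Submodule D K → Submodule D K) (hstar : IsSemistarOperation star) :
    (StarDedekind star ↔ (StarADD star ∧ StarFiniteCharacter star)) ∧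
    (StarDedekind star ↔ (StarNoetherian star ∧ StarADD star)) := by
  have hc := clo_cop hstar
  have hA : StarDedekind star → StarADD star := by
    intro hD M _ hM
    exact noeth_dvr hc hD.1 M ((max_fin_iff hstar M).mp hM) (hD.2 M hM)
  have hB : StarADD star → StarPMD star := fun h M _ hM => dvr_val (h M hM)
  refine ⟨⟨fun hD => ⟨hA hD, fun d d0 => ?_⟩, fun h => ⟨fun f hf => ?_, hB h.1⟩⟩,
    ⟨fun hD => ⟨hD.1, hA hD⟩, fun h => ⟨h.1, hB h.2⟩⟩⟩
  · simp only [max_fin_iff hstar]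
    exact noeth_finchar hc hD.1
      (fun M _ hM => hA hD M ((max_fin_iff hstar M).mpr hM)) d d0
  · refine noeth_of_local hc (fun M _ hM => h.1 M ((max_fin_iff hstar M).mpr hM)) ?_ f
      (fun n => quasi_qf hstar (hf n))
    intro d d0
    have := h.2 d d0
    simpa only [max_fin_iff hstar] using this

end Statement
end

section
/- Let D be an integral domain and ⋆ a semistar operation on D. Then D is a ⋆-Dedekind domain if and only if for each nonzero ideal I of D there exist a finite family of quasi-⋆_f-prime ideals P_1, …, P_n of D that are pairwise ⋆_f-comaximal and nonnegative integers e_1, …, e_n such that I^⋆̃ = (P_1^{e_1} P_2^{e_2} ⋯ P_n^{e_n})^⋆̃. Moreover, in this case, if I^⋆̃ ≠ D^⋆̃ one may take P_i^⋆̃ ≠ D^⋆̃ for all i, all exponents e_i positive, and then the factorization is unique. -/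
open scoped Pointwise

set_option linter.unusedSectionVars false
section DVRLemma
variable {R : Type*} [CommRing R] [IsDomain R] [IsLocalRing R]
open IsLocalRing

theorem aux_prime_principal {P : Ideal R} {a : R} {e : ℕ} (ha0 : a ≠ 0)
    (ham : a ∈ maximalIdeal R) (h : Ideal.span {a} = P ^ e) : ∃ p, P = Ideal.span {p} := by
  cases e with
  | zero =>
    exfalso
    rw [pow_zero, Ideal.one_eq_top, Ideal.span_singleton_eq_top] at h
    exact (mem_maximalIdeal a).1 ham h
  | succ k =>
    rw [pow_succ'] at h
    have h1 : ∃ p ∈ P, ∃ q ∈ P ^ k, p * q ∉ maximalIdeal R * Ideal.span {a} := by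
      by_contra! hc
      have h2 : P * P ^ k ≤ maximalIdeal R * Ideal.span {a} := Ideal.mul_le.2 hc
      have h3 : a ∈ maximalIdeal R * Ideal.span {a} :=
        h2 (h ▸ Ideal.mem_span_singleton_self a)
      obtain ⟨z, hz, hza⟩ := Ideal.mem_mul_span_singleton.1 h3
      have : z = 1 := mul_right_cancel₀ ha0 (by rw [hza, one_mul])
      rw [this] at hz
      exact (mem_maximalIdeal _).1 hz isUnit_one
    obtain ⟨p, hp, q, hq, hpq⟩ := h1
    have h4 : p * q ∈ Ideal.span {a} := h ▸ Ideal.mul_mem_mul hp hq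
    obtain ⟨r, hr⟩ := Ideal.mem_span_singleton'.1 h4
    have hru : IsUnit r := by
      by_contra hn
      exact hpq (Ideal.mem_mul_span_singleton.2 ⟨r, (mem_maximalIdeal r).2 hn, hr⟩)
    have hpq0 : p * q ≠ 0 := by rw [← hr]; exact mul_ne_zero hru.ne_zero ha0
    obtain ⟨u, rfl⟩ := hru
    refine ⟨p, le_antisymm (fun z hz => ?_) ((Ideal.span_singleton_le_iff_mem _).2 hp)⟩
    have h5 : z * q ∈ Ideal.span {a} := h ▸ Ideal.mul_mem_mul hz hq
    obtain ⟨c, hc⟩ := Ideal.mem_span_singleton'.1 h5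
    refine Ideal.mem_span_singleton'.2 ⟨c * ↑u⁻¹, mul_right_cancel₀ (right_ne_zero_of_mul hpq0) ?_⟩
    rw [mul_assoc, ← hr, ← hc, mul_assoc, Units.inv_mul_cancel_left]

theorem aux_one_sub {μ : R} (h : μ ∈ maximalIdeal R) : IsUnit (1 - μ) :=
  (isUnit_or_isUnit_one_sub_self μ).resolve_left ((mem_maximalIdeal _).1 h)

theorem aux_maximal (h : ∀ I : Ideal R, I ≠ ⊥ → ∃ (P : Ideal R) (e : ℕ), P.IsPrime ∧ I = P ^ e)
    {p : R} (hp0 : p ≠ 0) (hp : (Ideal.span {p}).IsPrime) : Ideal.span {p} = maximalIdeal R := by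
  refine le_antisymm (le_maximalIdeal hp.ne_top) (fun y hy => ?_)
  by_contra hyp
  have hpm : p ∈ maximalIdeal R := le_maximalIdeal hp.ne_top (Ideal.mem_span_singleton_self p)
  have hne : ∀ z : R, Ideal.span {p, z} ≠ ⊥ := fun z hz => hp0 (by
    have : p ∈ Ideal.span {p, z} := Ideal.subset_span (by simp)
    rwa [hz, Ideal.mem_bot] at this)
  have hmem : ∀ z : R, z ∈ maximalIdeal R → Ideal.span {p, z} ≠ ⊤ := fun z hz ht => by
    have : Ideal.span {p, z} ≤ maximalIdeal R := by
      rw [Ideal.span_le]; rintro w (rfl | rfl) <;> assumption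
    rw [ht] at this
    exact (maximalIdeal.isMaximal R).ne_top (top_le_iff.1 this)
  obtain ⟨Q, n, hQ, hn⟩ := h _ (hne (y ^ 2))
  obtain ⟨Q', k, hQ', hk⟩ := h _ (hne y)
  have hy2 : y ^ 2 ∈ maximalIdeal R := Ideal.pow_mem_of_mem _ hy _ (by norm_num)
  have hn0 : n ≠ 0 := by rintro rfl; exact hmem _ hy2 (by rw [hn, pow_zero, Ideal.one_eq_top])
  have hk0 : k ≠ 0 := by rintro rfl; exact hmem _ hy (by rw [hk, pow_zero, Ideal.one_eq_top])
  have hQm : Q ≤ maximalIdeal R := le_maximalIdeal hQ.ne_top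
  -- Q = Q'
  have hpQ : p ∈ Q := Ideal.pow_le_self hn0 (hn ▸ Ideal.subset_span (by simp))
  have hyQ : y ∈ Q := hQ.mem_of_pow_mem 2 (Ideal.pow_le_self hn0 (hn ▸ Ideal.subset_span (by simp)))
  have hpQ' : p ∈ Q' := Ideal.pow_le_self hk0 (hk ▸ Ideal.subset_span (by simp))
  have hyQ' : y ∈ Q' := Ideal.pow_le_self hk0 (hk ▸ Ideal.subset_span (by simp))
  have e1 : Q ≤ Q' := by
    apply hQ'.le_of_pow_le (n := n)
    rw [← hn, Ideal.span_le]; rintro w (rfl | rfl)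
    · exact hpQ'
    · exact Ideal.pow_mem_of_mem _ hyQ' _ (by norm_num)
  have e2 : Q' ≤ Q := by
    apply hQ.le_of_pow_le (n := k)
    rw [← hk, Ideal.span_le]; rintro w (rfl | rfl) <;> assumption
  obtain rfl := le_antisymm e1 e2
  have hsq : Ideal.span {p, y} ^ 2 = Q ^ (2 * k) := by rw [hk, ← pow_mul, mul_comm]
  by_cases hnk : n < 2 * k
  · have h1 : y ^ 2 ∈ Q ^ n * maximalIdeal R := by
      have : y ^ 2 ∈ Q ^ (2 * k) := by
        rw [← hsq]; exact Ideal.pow_mem_pow (Ideal.subset_span (by simp)) 2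
      have h2 : Q ^ (2 * k) ≤ Q ^ n * Q := by rw [← pow_succ]; exact Ideal.pow_le_pow_right hnk
      exact Ideal.mul_mono_right hQm (h2 this)
    rw [← hn, Ideal.span_insert, Ideal.sup_mul] at h1
    obtain ⟨u, hu, v, hv, huv⟩ := Submodule.mem_sup.1 h1
    obtain ⟨c, hc, rfl⟩ := Ideal.mem_span_singleton_mul.1 hu
    obtain ⟨d, hd, rfl⟩ := Ideal.mem_span_singleton_mul.1 hv
    have h3 : y ^ 2 * (1 - d) ∈ Ideal.span {p} :=
      Ideal.mem_span_singleton'.2 ⟨c, by linear_combination huv⟩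
    have h4 := (hp.mem_or_mem h3).resolve_right (fun h5 =>
      hp.ne_top (Ideal.eq_top_of_isUnit_mem _ h5 (aux_one_sub hd)))
    exact hyp (hp.mem_of_pow_mem 2 h4)
  · have h1 : p ∈ Q ^ (2 * k) :=
      Ideal.pow_le_pow_right (not_lt.1 hnk) (hn ▸ Ideal.subset_span (by simp))
    rw [← hsq, pow_two, Ideal.span_pair_mul_span_pair] at h1
    simp only [Ideal.mem_span_insert, Ideal.mem_span_singleton'] at h1
    obtain ⟨a, _, ⟨b, _, ⟨c, _, ⟨d, rfl⟩, rfl⟩, rfl⟩, h1⟩ := h1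
    have h2 : d * y ^ 2 ∈ Ideal.span {p} := Ideal.mem_span_singleton'.2
      ⟨1 - a * p - b * y - c * y, by linear_combination h1⟩
    have h3 := (hp.mem_or_mem h2).resolve_right (fun h5 => hyp (hp.mem_of_pow_mem 2 h5))
    obtain ⟨t, rfl⟩ := Ideal.mem_span_singleton'.1 h3
    have h4 : p * (1 - (a * p + b * y + c * y + t * y * y)) = 0 := by linear_combination h1
    have h5 : IsUnit (1 - (a * p + b * y + c * y + t * y * y)) := aux_one_sub
      (add_mem (add_mem (add_mem (Ideal.mul_mem_left _ _ hpm) (Ideal.mul_mem_left _ _ hy))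
        (Ideal.mul_mem_left _ _ hy)) (Ideal.mul_mem_left _ _ hy))
    exact h5.ne_zero ((mul_eq_zero.1 h4).resolve_left hp0)

theorem aux_dvr (hm : maximalIdeal R ≠ ⊥)
    (h : ∀ I : Ideal R, I ≠ ⊥ → ∃ (P : Ideal R) (e : ℕ), P.IsPrime ∧ I = P ^ e) :
    IsDiscreteValuationRing R := by
  have key : ∀ a : R, a ≠ 0 → a ∈ maximalIdeal R → ∃ p, p ≠ 0 ∧ Ideal.span {p} = maximalIdeal R ∧
      ∃ e, Ideal.span {a} = maximalIdeal R ^ e := by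
    intro a ha0 ha
    obtain ⟨P, e, hP, hPe⟩ := h (Ideal.span {a}) (by simpa using ha0)
    obtain ⟨p, rfl⟩ := aux_prime_principal ha0 ha hPe
    have hp0 : p ≠ 0 := by
      rintro rfl
      have : a ∈ (⊥ : Ideal R) := by
        have h1 : a ∈ Ideal.span {(0 : R)} := hP.mem_of_pow_mem 1 (by
          rw [pow_one]
          by_cases he : e = 0
          · subst he
            rw [pow_zero, Ideal.one_eq_top, Ideal.span_singleton_eq_top] at hPe
            exact absurd hPe ((mem_maximalIdeal a).1 ha)
          · exact Ideal.pow_le_self he (hPe ▸ Ideal.mem_span_singleton_self a))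
        simpa using h1
      exact ha0 (by simpa using this)
    have := aux_maximal h hp0 hP
    exact ⟨p, hp0, this, e, this ▸ hPe⟩
  obtain ⟨a, ha, ha0⟩ := Submodule.exists_mem_ne_zero_of_ne_bot hm
  obtain ⟨p, hp0, hpm, -⟩ := key a ha0 ha
  have hpp : Prime p := (Ideal.span_singleton_prime hp0).1 (hpm ▸ (maximalIdeal.isMaximal R).isPrime)
  refine IsDiscreteValuationRing.ofHasUnitMulPowIrreducibleFactorization
    ⟨p, hpp.irreducible, fun {x} hx => ?_⟩
  by_cases hxm : x ∈ maximalIdeal R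
  · obtain ⟨-, -, -, e, he⟩ := key x hx hxm
    refine ⟨e, ?_⟩
    rw [← Ideal.span_singleton_eq_span_singleton, he, ← hpm, Ideal.span_singleton_pow]
  · refine ⟨0, ?_⟩
    rw [pow_zero]
    exact (associated_one_iff_isUnit.2 (by simpa using hxm)).symm
end DVRLemma

section ClosureLemmas
variable {D : Type*} [CommRing D] [IsDomain D]
variable {K : Type*} [Field K] [Algebra D K] [IsFractionRing D K]

/-- The ideal closure `I ↦ I^∗ ∩ D`. -/
def scl (g : Submodule D K → Submodule D K) (I : Ideal D) : Ideal D :=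
  Submodule.comap (Algebra.linearMap D K) (g (idealExt K I))

theorem mem_scl {g : Submodule D K → Submodule D K} {I : Ideal D} {x : D} :
    x ∈ scl g I ↔ algebraMap D K x ∈ g (idealExt K I) := Iff.rfl

theorem mem_idealExt {I : Ideal D} {x : D} : algebraMap D K x ∈ idealExt K I ↔ x ∈ I := by
  unfold idealExt
  constructor
  · rintro ⟨y, hy, hyx⟩
    rwa [← IsFractionRing.injective D K hyx]
  · intro h; exact ⟨x, h, rfl⟩

theorem idealExt_ne_bot {I : Ideal D} (h : I ≠ ⊥) : idealExt K I ≠ ⊥ := by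
  obtain ⟨a, ha, ha0⟩ := Submodule.exists_mem_ne_zero_of_ne_bot h
  intro hb
  have : algebraMap D K a ∈ idealExt K I := mem_idealExt.2 ha
  rw [hb, Submodule.mem_bot] at this
  exact ha0 ((map_eq_zero_iff _ (IsFractionRing.injective D K)).1 this)

theorem idealExt_mono {I J : Ideal D} (h : I ≤ J) : idealExt K I ≤ idealExt K J :=
  Submodule.map_mono h

theorem idealExt_top : idealExt K (⊤ : Ideal D) = 1 := by
  unfold idealExt
  rw [Submodule.one_eq_range, Submodule.map_top]

theorem idealExt_span_mul (a : D) (I : Ideal D) :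
    idealExt K (Ideal.span {a} * I) =
      Submodule.map (LinearMap.mulLeft D (algebraMap D K a)) (idealExt K I) := by
  ext x
  constructor
  · rintro ⟨y, hy, rfl⟩
    obtain ⟨z, hz, rfl⟩ := Ideal.mem_span_singleton_mul.1 hy
    exact ⟨algebraMap D K z, mem_idealExt.2 hz, by simp⟩
  · rintro ⟨_, ⟨z, hz, rfl⟩, rfl⟩
    exact ⟨a * z, Ideal.mem_span_singleton_mul.2 ⟨z, hz, rfl⟩, by simp⟩

variable {star : Submodule D K → Submodule D K}

theorem le_scl (hs : IsSemistarOperation star) {I : Ideal D} (h : I ≠ ⊥) : I ≤ scl star I :=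
  fun _ hx => hs.le_star (idealExt_ne_bot h) (mem_idealExt.2 hx)

theorem scl_mono (hs : IsSemistarOperation star) {I J : Ideal D} (h : I ≠ ⊥) (hIJ : I ≤ J) :
    scl star I ≤ scl star J :=
  fun _ hx => hs.mono (idealExt_ne_bot h) (idealExt_ne_bot (ne_bot_of_le_ne_bot h hIJ))
    (idealExt_mono hIJ) hx

theorem scl_le_of_le (hs : IsSemistarOperation star) {I J : Ideal D} (h : I ≠ ⊥) (hJ : J ≠ ⊥)
    (hIJ : I ≤ scl star J) : scl star I ≤ scl star J := by
  intro x hx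
  rw [mem_scl] at *
  rw [← hs.star_star (idealExt_ne_bot hJ)]
  refine hs.mono (idealExt_ne_bot h) (hs.ne_bot (idealExt_ne_bot hJ)) ?_ hx
  rintro _ ⟨y, hy, rfl⟩
  exact hIJ hy

theorem mul_mem_scl_iff (hs : IsSemistarOperation star) {I : Ideal D} (h : I ≠ ⊥) {a x : D}
    (ha : a ≠ 0) : a * x ∈ scl star (Ideal.span {a} * I) ↔ x ∈ scl star I := by
  have ha' : algebraMap D K a ≠ 0 := by
    simpa using ha
  rw [mem_scl, idealExt_span_mul, hs.map_smul _ ha' (idealExt_ne_bot h), mem_scl, map_mul]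
  constructor
  · rintro ⟨y, hy, hyx⟩
    have : y = algebraMap D K x := mul_left_cancel₀ ha' hyx
    rwa [← this]
  · intro hx; exact ⟨_, hx, rfl⟩

theorem mem_finTypeOp (hs : IsSemistarOperation star) {E : Submodule D K} (hE : E ≠ ⊥) {x : K} :
    x ∈ finTypeOp star E ↔ ∃ F : Submodule D K, F ≠ ⊥ ∧ F.FG ∧ F ≤ E ∧ x ∈ star F := by
  constructor
  · intro hx
    unfold finTypeOp at hx
    let S := {F : Submodule D K // F ≠ ⊥ ∧ F.FG ∧ F ≤ E}
    have hx' : x ∈ ⨆ F : S, star F.1 := by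
      refine (?_ : _ ≤ ⨆ F : S, star F.1) hx
      refine iSup_le fun F => iSup_le fun h1 => iSup_le fun h2 => iSup_le fun h3 => ?_
      exact le_iSup (fun F : S => star F.1) ⟨F, h1, h2, h3⟩
    obtain ⟨a, ha, ha0⟩ := Submodule.exists_mem_ne_zero_of_ne_bot hE
    have : Nonempty S := ⟨⟨Submodule.span D {a}, by simpa using ha0,
      Submodule.fg_span_singleton a, by simpa using ha⟩⟩
    rw [Submodule.mem_iSup_of_directed] at hx'
    · obtain ⟨F, hF⟩ := hx'
      exact ⟨F.1, F.2.1, F.2.2.1, F.2.2.2, hF⟩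
    · intro F G
      have hb : F.1 ⊔ G.1 ≠ ⊥ := ne_bot_of_le_ne_bot F.2.1 le_sup_left
      exact ⟨⟨F.1 ⊔ G.1, hb, F.2.2.1.sup G.2.2.1, sup_le F.2.2.2 G.2.2.2⟩,
        hs.mono F.2.1 hb le_sup_left, hs.mono G.2.1 hb le_sup_right⟩
  · rintro ⟨F, h1, h2, h3, hx⟩
    exact (le_iSup_of_le F (le_iSup_of_le h1 (le_iSup_of_le h2 (le_iSup_of_le h3 le_rfl))) :
      star F ≤ finTypeOp star E) hx

theorem mem_fcl (hs : IsSemistarOperation star) {I : Ideal D} (h : I ≠ ⊥) {x : D} :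
    x ∈ scl (finTypeOp star) I ↔ ∃ J : Ideal D, J ≠ ⊥ ∧ J.FG ∧ J ≤ I ∧ x ∈ scl star J := by
  rw [mem_scl, mem_finTypeOp hs (idealExt_ne_bot h)]
  constructor
  · rintro ⟨F, h1, h2, h3, hx⟩
    have hF : idealExt K (Submodule.comap (Algebra.linearMap D K) F) = F := by
      unfold idealExt
      rw [Submodule.map_comap_eq, inf_eq_right]
      exact h3.trans (by rintro _ ⟨y, -, rfl⟩; exact ⟨y, rfl⟩)
    refine ⟨Submodule.comap (Algebra.linearMap D K) F, ?_, ?_, ?_, ?_⟩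
    · rintro h0
      rw [h0] at hF
      apply h1
      rw [← hF]; unfold idealExt; simp
    · apply Submodule.fg_of_fg_map_injective (Algebra.linearMap D K) (IsFractionRing.injective D K)
      change (idealExt K _).FG
      rwa [hF]
    · intro y hy
      exact mem_idealExt.1 (h3 hy)
    · rwa [mem_scl, hF]
  · rintro ⟨J, h1, h2, h3, hx⟩
    exact ⟨idealExt K J, idealExt_ne_bot h1, Submodule.FG.map _ h2, idealExt_mono h3, hx⟩

theorem le_fcl (hs : IsSemistarOperation star) {I : Ideal D} (h : I ≠ ⊥) :
    I ≤ scl (finTypeOp star) I := by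
  intro x hx
  obtain ⟨a, ha, ha0⟩ := Submodule.exists_mem_ne_zero_of_ne_bot h
  have hb : Ideal.span {a, x} ≠ ⊥ := fun h0 => ha0 (by
    have : a ∈ Ideal.span {a, x} := Ideal.subset_span (by simp)
    rwa [h0, Ideal.mem_bot] at this)
  refine (mem_fcl hs h).2 ⟨Ideal.span {a, x}, hb, ?_, ?_, ?_⟩
  · exact Submodule.fg_span (by simp)
  · rw [Ideal.span_le]; rintro w (rfl | rfl) <;> assumption
  · exact le_scl hs hb (Ideal.subset_span (by simp))

theorem fcl_mono (hs : IsSemistarOperation star) {I J : Ideal D} (h : I ≠ ⊥) (hIJ : I ≤ J) :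
    scl (finTypeOp star) I ≤ scl (finTypeOp star) J := by
  intro x hx
  obtain ⟨F, h1, h2, h3, h4⟩ := (mem_fcl hs h).1 hx
  exact (mem_fcl hs (ne_bot_of_le_ne_bot h hIJ)).2 ⟨F, h1, h2, h3.trans hIJ, h4⟩

theorem fcl_le_scl (hs : IsSemistarOperation star) {I : Ideal D} (h : I ≠ ⊥) :
    scl (finTypeOp star) I ≤ scl star I := by
  intro x hx
  obtain ⟨F, h1, h2, h3, h4⟩ := (mem_fcl hs h).1 hx
  exact scl_mono hs h1 h3 h4

theorem fg_le_fcl (hs : IsSemistarOperation star) {I J : Ideal D} (h : I ≠ ⊥) (hJ : J.FG)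
    (hJI : J ≤ scl (finTypeOp star) I) :
    ∃ G : Ideal D, G ≠ ⊥ ∧ G.FG ∧ G ≤ I ∧ J ≤ scl star G := by
  induction J, hJ using Submodule.fg_induction with
  | singleton x =>
    obtain ⟨G, h1, h2, h3, h4⟩ := (mem_fcl hs h).1 (hJI (Submodule.mem_span_singleton_self x))
    exact ⟨G, h1, h2, h3, by simpa using h4⟩
  | sup A B _ _ ihA ihB =>
    obtain ⟨G, h1, h2, h3, h4⟩ := ihA (le_sup_left.trans hJI)
    obtain ⟨G', h1', h2', h3', h4'⟩ := ihB (le_sup_right.trans hJI)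
    exact ⟨G ⊔ G', ne_bot_of_le_ne_bot h1 le_sup_left, Submodule.FG.sup h2 h2', sup_le h3 h3',
      sup_le (h4.trans (scl_mono hs h1 le_sup_left)) (h4'.trans (scl_mono hs h1' le_sup_right))⟩

theorem fcl_fcl (hs : IsSemistarOperation star) {I : Ideal D} (h : I ≠ ⊥) :
    scl (finTypeOp star) (scl (finTypeOp star) I) = scl (finTypeOp star) I := by
  have hb := ne_bot_of_le_ne_bot h (le_fcl hs h)
  refine le_antisymm (fun x hx => ?_) (le_fcl hs hb)
  obtain ⟨J, h1, h2, h3, h4⟩ := (mem_fcl hs hb).1 hx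
  obtain ⟨G, g1, g2, g3, g4⟩ := fg_le_fcl hs h h2 h3
  exact (mem_fcl hs h).2 ⟨G, g1, g2, g3, scl_le_of_le hs h1 g1 g4 h4⟩

end ClosureLemmas

section MaxLemmas
variable {D : Type*} [CommRing D] [IsDomain D]
variable {K : Type*} [Field K] [Algebra D K] [IsFractionRing D K]
variable {star : Submodule D K → Submodule D K}

theorem qmax_prime (hs : IsSemistarOperation star) {M : Ideal D}
    (hM : QuasiStarMaximal (finTypeOp star) M) : M.IsPrime := by
  obtain ⟨⟨h0, hcl⟩, ht, hmax⟩ := hM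
  change scl (finTypeOp star) M = M at hcl
  refine ⟨ht, fun {a b} hab => ?_⟩
  by_contra! hc
  obtain ⟨ha, hb⟩ := hc
  have hb0 : b ≠ 0 := fun h => hb (h ▸ M.zero_mem)
  have hN : M ⊔ Ideal.span {a} ≠ ⊥ := ne_bot_of_le_ne_bot h0 le_sup_left
  have hN' := ne_bot_of_le_ne_bot hN (le_fcl hs hN)
  have htop : scl (finTypeOp star) (M ⊔ Ideal.span {a}) = ⊤ := by
    by_contra hne
    have := hmax _ ⟨hN', fcl_fcl hs hN⟩ hne (le_sup_left.trans (le_fcl hs hN))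
    apply ha
    rw [← this]
    exact le_fcl hs hN (le_sup_right (a := M) (Ideal.mem_span_singleton_self a))
  have h1 : (1 : D) ∈ scl (finTypeOp star) (M ⊔ Ideal.span {a}) := htop ▸ Submodule.mem_top
  obtain ⟨J, j1, j2, j3, j4⟩ := (mem_fcl hs hN).1 h1
  apply hb
  rw [← hcl, mem_fcl hs h0]
  have hbJ : Ideal.span {b} * J ≠ ⊥ := by
    rw [Ne, Ideal.mul_eq_bot, not_or]; exact ⟨by simpa using hb0, j1⟩
  refine ⟨Ideal.span {b} * J, hbJ, (Submodule.fg_span_singleton b).mul j2, ?_, ?_⟩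
  · refine (Ideal.mul_mono_right j3).trans ?_
    rw [Ideal.mul_sup, Ideal.span_singleton_mul_span_singleton]
    refine sup_le Ideal.mul_le_right ?_
    rw [Ideal.span_singleton_le_iff_mem, mul_comm]; exact hab
  · have := (mul_mem_scl_iff hs j1 hb0).2 j4
    rwa [mul_one] at this

theorem exists_qmax (hs : IsSemistarOperation star) {I : Ideal D} (h : I ≠ ⊥)
    (ht : scl (finTypeOp star) I ≠ ⊤) : ∃ M, QuasiStarMaximal (finTypeOp star) M ∧ I ≤ M := by
  have hz := zorn_le_nonempty₀ {J : Ideal D | QuasiStarIdeal (finTypeOp star) J ∧ J ≠ ⊤} ?_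
    (scl (finTypeOp star) I) ⟨⟨ne_bot_of_le_ne_bot h (le_fcl hs h), fcl_fcl hs h⟩, ht⟩
  · obtain ⟨M, hIM, hM⟩ := hz
    refine ⟨M, ⟨hM.prop.1, hM.prop.2, fun J hJ hJt hMJ => ?_⟩, (le_fcl hs h).trans hIM⟩
    exact le_antisymm (hM.le_of_ge ⟨hJ, hJt⟩ hMJ) hMJ
  · intro c hc hch y hy
    have hdir : DirectedOn (· ≤ ·) c := hch.directedOn
    have hb : sSup c ≠ ⊥ := ne_bot_of_le_ne_bot (hc hy).1.1 (le_sSup hy)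
    refine ⟨sSup c, ⟨⟨hb, ?_⟩, ?_⟩, fun z hz => le_sSup hz⟩
    · change scl (finTypeOp star) (sSup c) = sSup c
      refine le_antisymm (fun x hx => ?_) (le_fcl hs hb)
      obtain ⟨J, j1, j2, j3, j4⟩ := (mem_fcl hs hb).1 hx
      obtain ⟨z, hz, hJz⟩ : ∃ z ∈ c, J ≤ z := by
        have := (Submodule.fg_iff_compact J).1 j2
        exact (CompleteLattice.isCompactElement_iff_le_of_directed_sSup_le _ _).1 this c ⟨y, hy⟩ hdir j3
      have : x ∈ scl (finTypeOp star) z := (mem_fcl hs (hc hz).1.1).2 ⟨J, j1, j2, hJz, j4⟩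
      have h2 : scl (finTypeOp star) z = z := (hc hz).1.2
      rw [h2] at this
      exact le_sSup hz this
    · intro htop
      have h1 : (1 : D) ∈ sSup c := htop ▸ Submodule.mem_top
      obtain ⟨z, hz, h1z⟩ := (Submodule.mem_sSup_of_directed ⟨y, hy⟩ hdir).1 h1
      exact (hc hz).2 ((Ideal.eq_top_iff_one z).2 h1z)

theorem fcl_eq_top_iff (hs : IsSemistarOperation star) {I : Ideal D} (h : I ≠ ⊥) :
    scl (finTypeOp star) I = ⊤ ↔ ∀ M, QuasiStarMaximal (finTypeOp star) M → ¬ I ≤ M := by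
  constructor
  · intro ht M hM hIM
    have h1 := fcl_mono hs h hIM
    have h2 : scl (finTypeOp star) M = M := hM.1.2
    rw [ht, h2] at h1
    exact hM.2.1 (top_le_iff.1 h1)
  · intro hM
    by_contra hne
    obtain ⟨M, h1, h2⟩ := exists_qmax hs h hne
    exact hM M h1 h2

theorem comax_iff (hs : IsSemistarOperation star) {I : Ideal D} (h : I ≠ ⊥) :
    finTypeOp star (idealExt K I) = finTypeOp star (1 : Submodule D K) ↔
      ∀ M, QuasiStarMaximal (finTypeOp star) M → ¬ I ≤ M := by
  have htb : (⊤ : Ideal D) ≠ ⊥ := top_ne_bot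
  rw [← fcl_eq_top_iff hs h, ← idealExt_top]
  constructor
  · intro he
    have h1 := le_fcl hs htb
    unfold scl at h1 ⊢
    rw [he]
    exact top_le_iff.1 h1
  · intro he
    refine le_antisymm (fun x hx => ?_) (fun x hx => ?_)
    · obtain ⟨F, f1, f2, f3, f4⟩ := (mem_finTypeOp hs (idealExt_ne_bot h)).1 hx
      exact (mem_finTypeOp hs (idealExt_ne_bot htb)).2 ⟨F, f1, f2, f3.trans (idealExt_mono le_top), f4⟩
    · obtain ⟨F, f1, f2, f3, f4⟩ := (mem_finTypeOp hs (idealExt_ne_bot htb)).1 hx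
      have h1 : (1 : D) ∈ scl (finTypeOp star) I := he ▸ Submodule.mem_top
      obtain ⟨G, g1, g2, g3, g4⟩ := (mem_finTypeOp hs (idealExt_ne_bot h)).1 h1
      refine (mem_finTypeOp hs (idealExt_ne_bot h)).2 ⟨G, g1, g2, g3, ?_⟩
      rw [← hs.star_star g1]
      refine hs.mono f1 (hs.ne_bot g1) (f3.trans ?_) f4
      rintro _ ⟨d, -, rfl⟩
      have := Submodule.smul_mem _ d g4
      rwa [Algebra.linearMap_apply, map_one, Algebra.smul_def, mul_one] at this

theorem mem_extendToPrime {Q : Ideal D} (hQ : Q.IsPrime) {E : Submodule D K} {x : K} :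
    x ∈ extendToPrime Q E ↔ ∃ s : D, s ∉ Q ∧ algebraMap D K s * x ∈ E := by
  constructor
  · intro hx
    unfold extendToPrime at hx
    induction hx using Submodule.span_induction with
    | mem x h => exact h
    | zero => exact ⟨1, fun h => hQ.ne_top ((Ideal.eq_top_iff_one _).2 h), by simp⟩
    | add x y _ _ hx hy =>
      obtain ⟨s, hs, hsx⟩ := hx
      obtain ⟨t, ht, hty⟩ := hy
      refine ⟨s * t, fun h => (hQ.mem_or_mem h).elim hs ht, ?_⟩
      have := add_mem (Submodule.smul_mem _ t hsx) (Submodule.smul_mem _ s hty)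
      convert this using 1
      simp only [Algebra.smul_def, map_mul]; ring
    | smul a x _ hx =>
      obtain ⟨s, hs, hsx⟩ := hx
      refine ⟨s, hs, ?_⟩
      have := Submodule.smul_mem _ a hsx
      convert this using 1
      simp only [Algebra.smul_def]; ring
  · intro h; exact Submodule.subset_span h

/-- extension of an ideal to the localization -/
abbrev lm (M : Ideal D) [M.IsPrime] (I : Ideal D) : Ideal (Localization.AtPrime M) :=
  I.map (algebraMap D (Localization.AtPrime M))

theorem mem_lm {M : Ideal D} [M.IsPrime] {I : Ideal D} {x : D} :
    algebraMap D (Localization.AtPrime M) x ∈ lm M I ↔ ∃ s, s ∉ M ∧ s * x ∈ I := by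
  rw [IsLocalization.algebraMap_mem_map_algebraMap_iff M.primeCompl]
  rfl

theorem lm_le_iff {M : Ideal D} [M.IsPrime] {I J : Ideal D} :
    lm M I ≤ lm M J ↔ ∀ x ∈ I, ∃ s, s ∉ M ∧ s * x ∈ J := by
  rw [Ideal.map_le_iff_le_comap]
  exact forall₂_congr fun x _ => mem_lm

theorem lm_eq_top_iff {M : Ideal D} [M.IsPrime] {I : Ideal D} : lm M I = ⊤ ↔ ¬ I ≤ M := by
  rw [Ideal.eq_top_iff_one, ← map_one (algebraMap D (Localization.AtPrime M)), mem_lm,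
    SetLike.not_le_iff_exists]
  simp only [mul_one]
  exact exists_congr fun _ => and_comm

theorem stable_eq_iff (hs : IsSemistarOperation star) {I J : Ideal D} :
    stableOp star (idealExt K I) = stableOp star (idealExt K J) ↔
      ∀ (M : Ideal D) [M.IsPrime], QuasiStarMaximal (finTypeOp star) M → lm M I = lm M J := by
  have key : ∀ I J : Ideal D, stableOp star (idealExt K I) ≤ stableOp star (idealExt K J) ↔
      ∀ (M : Ideal D) [M.IsPrime], QuasiStarMaximal (finTypeOp star) M → lm M I ≤ lm M J := by
    intro I J
    constructor
    · intro h M hMp hM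
      rw [lm_le_iff]
      intro x hx
      have h1 : algebraMap D K x ∈ stableOp star (idealExt K I) := by
        simp only [stableOp, Submodule.mem_iInf]
        intro Q hQ
        have hQp := qmax_prime hs hQ
        exact (mem_extendToPrime hQp).2 ⟨1, fun h => hQp.ne_top ((Ideal.eq_top_iff_one _).2 h),
          by simpa using mem_idealExt.2 hx⟩
      have h2 := h h1
      simp only [stableOp, Submodule.mem_iInf] at h2
      obtain ⟨s, h3, h4⟩ := (mem_extendToPrime hMp).1 (h2 M hM)
      rw [← map_mul, mem_idealExt] at h4
      exact ⟨s, h3, h4⟩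
    · intro h x hx
      simp only [stableOp, Submodule.mem_iInf] at hx ⊢
      intro Q hQ
      have hQp := qmax_prime hs hQ
      obtain ⟨s, h1, ⟨y, hy, hyx⟩⟩ := (mem_extendToPrime hQp).1 (hx Q hQ)
      obtain ⟨t, ht, hty⟩ := lm_le_iff.1 (h Q hQ) y hy
      refine (mem_extendToPrime hQp).2 ⟨t * s, fun h => (hQp.mem_or_mem h).elim ht h1, ?_⟩
      rw [map_mul, mul_assoc, ← hyx, Algebra.linearMap_apply, ← map_mul, mem_idealExt]
      exact hty
  rw [le_antisymm_iff, key, key]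
  constructor
  · rintro ⟨h1, h2⟩ M _ hM
    exact le_antisymm (h1 M hM) (h2 M hM)
  · intro h
    exact ⟨fun M _ hM => (h M hM).le, fun M _ hM => (h M hM).ge⟩

theorem stable_ne_one_iff (hs : IsSemistarOperation star) {I : Ideal D} :
    stableOp star (idealExt K I) ≠ stableOp star (1 : Submodule D K) ↔
      ∃ M, QuasiStarMaximal (finTypeOp star) M ∧ I ≤ M := by
  rw [← idealExt_top, Ne, stable_eq_iff hs]
  constructor
  · intro h
    push Not at h
    obtain ⟨M, hp, hM, hne⟩ := h
    refine ⟨M, hM, ?_⟩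
    by_contra hc
    exact hne (by rw [lm_eq_top_iff.2 hc, lm, Ideal.map_top])
  · rintro ⟨M, hM, hIM⟩ h
    have hp := qmax_prime hs hM
    have := h M hM
    rw [lm, lm, Ideal.map_top] at this
    exact lm_eq_top_iff.1 this hIM

theorem mem_of_local (hs : IsSemistarOperation star) {I : Ideal D} (hI : QuasiStarIdeal star I)
    {x : D} (h : ∀ M, QuasiStarMaximal (finTypeOp star) M → ∃ s, s ∉ M ∧ s * x ∈ I) : x ∈ I := by
  by_cases hx0 : x = 0
  · rw [hx0]; exact I.zero_mem
  have hcl : scl star I = I := hI.2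
  let J : Ideal D := Submodule.comap (LinearMap.mulRight D x) I
  have hJ : ∀ s, s ∈ J ↔ s * x ∈ I := fun s => Iff.rfl
  have hIJ : I ≤ J := fun s hs => (hJ s).2 (I.mul_mem_right _ hs)
  have hJ0 : J ≠ ⊥ := ne_bot_of_le_ne_bot hI.1 hIJ
  have h1 : (1 : D) ∈ scl (finTypeOp star) J := by
    rw [(fcl_eq_top_iff hs hJ0).2]; trivial
    intro M hM hJM
    obtain ⟨s, h1, h2⟩ := h M hM
    exact h1 (hJM h2)
  have h2 := (mul_mem_scl_iff hs hJ0 hx0).2 (fcl_le_scl hs hJ0 h1)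
  rw [mul_one] at h2
  rw [← hcl]
  refine scl_mono hs ?_ ?_ h2
  · rw [Ne, Ideal.mul_eq_bot, not_or]; exact ⟨by simpa using hx0, hJ0⟩
  · intro z hz
    obtain ⟨w, hw, rfl⟩ := Ideal.mem_span_singleton_mul.1 hz
    rw [mul_comm]; exact hw

end MaxLemmas

section GoodLemmas
variable {D : Type*} [CommRing D] [IsDomain D]
variable {K : Type*} [Field K] [Algebra D K] [IsFractionRing D K]
variable {star : Submodule D K → Submodule D K}
open IsLocalRing

theorem lm_ne_bot {M : Ideal D} [M.IsPrime] {I : Ideal D} (h : I ≠ ⊥) : lm M I ≠ ⊥ := by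
  obtain ⟨a, ha, ha0⟩ := Submodule.exists_mem_ne_zero_of_ne_bot h
  intro hb
  have h1 : algebraMap D (Localization.AtPrime M) a ∈ lm M I := Ideal.mem_map_of_mem _ ha
  rw [hb, Ideal.mem_bot] at h1
  exact ha0 ((map_eq_zero_iff _ (IsLocalization.injective (Localization.AtPrime M)
    M.primeCompl_le_nonZeroDivisors)).1 h1)

theorem lm_self {M : Ideal D} [M.IsPrime] : lm M M = maximalIdeal (Localization.AtPrime M) :=
  Localization.AtPrime.map_eq_maximalIdeal

theorem lm_prime {M : Ideal D} [M.IsPrime] {Q : Ideal D} (hQ : Q.IsPrime) (h : Q ≤ M) :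
    (lm M Q).IsPrime := by
  apply IsLocalization.isPrime_of_isPrime_disjoint M.primeCompl _ _ hQ
  rw [Set.disjoint_left]
  intro x hx hxQ
  exact hx (h hxQ)

theorem prime_eq {M : Ideal D} [M.IsPrime] [IsDiscreteValuationRing (Localization.AtPrime M)]
    {Q : Ideal D} (hQ : Q.IsPrime) (h0 : Q ≠ ⊥) (h : Q ≤ M) : Q = M := by
  have h1 : (lm M Q).IsMaximal := (lm_prime hQ h).isMaximal (lm_ne_bot h0)
  have h2 := eq_maximalIdeal h1
  refine le_antisymm h fun x hx => ?_
  have h3 : algebraMap D (Localization.AtPrime M) x ∈ lm M Q := by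
    rw [h2, ← lm_self]; exact Ideal.mem_map_of_mem _ hx
  obtain ⟨s, hs, hsx⟩ := mem_lm.1 h3
  exact (hQ.mem_or_mem hsx).resolve_left (fun h4 => hs (h h4))

/-- all localizations at quasi-maximal ideals are DVRs -/
def GoodLoc (star : Submodule D K → Submodule D K) : Prop :=
  ∀ (M : Ideal D) [M.IsPrime], QuasiStarMaximal (finTypeOp star) M →
    IsDiscreteValuationRing (Localization.AtPrime M)

theorem wf_of_noeth (hN : StarNoetherian star) :
    WellFoundedGT {J : Ideal D // QuasiStarIdeal star J} := by
  rw [wellFoundedGT_iff_monotone_chain_condition]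
  intro a
  obtain ⟨n, hn⟩ := hN ⟨fun k => (a k).1, fun i j hij => a.monotone hij⟩ (fun k => (a k).2)
  exact ⟨n, fun m hm => Subtype.ext (hn m hm).symm⟩

theorem qsi_scl (hs : IsSemistarOperation star) {I : Ideal D} (h : I ≠ ⊥) :
    QuasiStarIdeal star (scl star I) := by
  have hb := ne_bot_of_le_ne_bot h (le_scl hs h)
  exact ⟨hb, le_antisymm (scl_le_of_le hs hb h le_rfl) (le_scl hs hb)⟩

theorem exists_fg (hs : IsSemistarOperation star) (hN : StarNoetherian star) {I : Ideal D}
    (h : I ≠ ⊥) : ∃ F : Ideal D, F ≠ ⊥ ∧ F.FG ∧ F ≤ I ∧ I ≤ scl star F := by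
  have wf := wf_of_noeth hN
  obtain ⟨a, ha, ha0⟩ := Submodule.exists_mem_ne_zero_of_ne_bot h
  let S : Set {J : Ideal D // QuasiStarIdeal star J} :=
    {J | ∃ F : Ideal D, F ≠ ⊥ ∧ F.FG ∧ F ≤ I ∧ J.1 = scl star F}
  have ha1 : Ideal.span {a} ≠ ⊥ := by simpa using ha0
  have hne : S.Nonempty := ⟨⟨_, qsi_scl hs ha1⟩, Ideal.span {a}, ha1,
    Submodule.fg_span_singleton a, by simpa [Ideal.span_le] using ha, rfl⟩
  obtain ⟨J, ⟨F, f1, f2, f3, f4⟩, hmax⟩ := wf.wf.has_min S hne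
  refine ⟨F, f1, f2, f3, fun x hx => ?_⟩
  have g1 : F ⊔ Ideal.span {x} ≠ ⊥ := ne_bot_of_le_ne_bot f1 le_sup_left
  have := hmax ⟨_, qsi_scl hs g1⟩ ⟨F ⊔ Ideal.span {x}, g1,
    Submodule.FG.sup f2 (Submodule.fg_span_singleton x),
    sup_le f3 (by simpa [Ideal.span_le] using hx), rfl⟩
  by_contra hc
  apply this
  refine lt_of_le_of_ne ?_ ?_
  · change J.1 ≤ _
    rw [f4]; exact scl_mono hs f1 le_sup_left
  · intro he
    apply hc
    rw [← f4, he]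
    exact le_scl hs g1 (le_sup_right (a := F) (Ideal.mem_span_singleton_self x))

theorem val_total {M : Ideal D} [M.IsPrime] (hv : IsValuationDomain (Localization.AtPrime M))
    (a b : D) : (∃ t, t ∉ M ∧ t * b ∈ Ideal.span {a}) ∨ (∃ t, t ∉ M ∧ t * a ∈ Ideal.span {b}) := by
  obtain ⟨hd, hv⟩ := hv
  rw [← mem_lm, ← mem_lm, lm, lm, Ideal.map_span, Ideal.map_span, Set.image_singleton,
    Set.image_singleton, Ideal.mem_span_singleton, Ideal.mem_span_singleton]
  exact ValuationRing.dvd_total _ _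

theorem fg_principal {M : Ideal D} [hp : M.IsPrime] (hv : IsValuationDomain (Localization.AtPrime M))
    {F : Ideal D} (hF : F.FG) : ∃ a ∈ F, ∃ s, s ∉ M ∧ ∀ y ∈ F, s * y ∈ Ideal.span {a} := by
  induction F, hF using Submodule.fg_induction with
  | singleton x =>
    exact ⟨x, Submodule.mem_span_singleton_self x, 1,
      fun h => hp.ne_top ((Ideal.eq_top_iff_one _).2 h), fun y hy => by simpa using hy⟩
  | sup A B _ _ ihA ihB =>
    obtain ⟨a, ha, s, hs, hsa⟩ := ihA
    obtain ⟨b, hb, t, ht, htb⟩ := ihB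
    have key : ∀ (A B : Ideal D) (a b s t : D), a ∈ A → s ∉ M → t ∉ M →
        (∀ y ∈ A, s * y ∈ Ideal.span {a}) → (∀ y ∈ B, t * y ∈ Ideal.span {b}) →
        (∃ t, t ∉ M ∧ t * b ∈ Ideal.span {a}) →
        ∃ a ∈ A ⊔ B, ∃ s, s ∉ M ∧ ∀ y ∈ A ⊔ B, s * y ∈ Ideal.span {a} := by
      intro A B a b s t ha hs ht hsa htb ⟨u, hu, hub⟩
      refine ⟨a, Submodule.mem_sup_left ha, u * s * t, ?_, ?_⟩
      · intro h
        exact (hp.mem_or_mem h).elim (fun h => (hp.mem_or_mem h).elim hu hs) ht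
      · intro y hy
        obtain ⟨v, hv, w, hw, rfl⟩ := Submodule.mem_sup.1 hy
        obtain ⟨c, hc⟩ := Ideal.mem_span_singleton'.1 (hsa v hv)
        obtain ⟨d, hd⟩ := Ideal.mem_span_singleton'.1 (htb w hw)
        obtain ⟨e, he⟩ := Ideal.mem_span_singleton'.1 hub
        refine Ideal.mem_span_singleton'.2 ⟨u * t * c + s * d * e, ?_⟩
        linear_combination u * t * hc + s * u * hd + s * d * he
    rcases val_total hv a b with h | h
    · exact key A B a b s t ha hs ht hsa htb h
    · have := key B A b a t s hb ht hs htb hsa h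
      rwa [sup_comm] at this

theorem scl_fg_local (hs : IsSemistarOperation star) (hP : StarPMD star) {M : Ideal D}
    (hM : QuasiStarMaximal (finTypeOp star) M) {F : Ideal D} (hF : F.FG) (hF0 : F ≠ ⊥) {x : D}
    (hx : x ∈ scl star F) : ∃ s, s ∉ M ∧ s * x ∈ F := by
  have hp := qmax_prime hs hM
  have hv := hP M hM
  obtain ⟨a, ha, s, hsM, hsa⟩ := fg_principal hv hF
  have hs0 : s ≠ 0 := fun h => hsM (h ▸ M.zero_mem)
  have hspan : ∀ {c : D}, c ≠ 0 → Ideal.span {c} ≠ ⊥ := fun h => by simpa using h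
  have ha0 : a ≠ 0 := by
    rintro rfl
    apply hF0
    rw [eq_bot_iff]
    intro y hy
    have := hsa y hy
    simpa [hs0] using this
  have hmulF : Ideal.span {s} * F ≤ Ideal.span {a} := by
    intro z hz
    obtain ⟨w, hw, rfl⟩ := Ideal.mem_span_singleton_mul.1 hz
    exact hsa w hw
  have hy : s * x ∈ scl star (Ideal.span {a}) := by
    refine scl_mono hs ?_ hmulF ((mul_mem_scl_iff hs hF0 hs0).2 hx)
    rw [Ne, Ideal.mul_eq_bot, not_or]; exact ⟨hspan hs0, hF0⟩
  have haF : Ideal.span {a} ≤ F := (Ideal.span_singleton_le_iff_mem _).2 ha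
  suffices h : ∃ t, t ∉ M ∧ t * (s * x) ∈ Ideal.span {a} by
    obtain ⟨t, ht, h⟩ := h
    refine ⟨t * s, fun h => (hp.mem_or_mem h).elim ht hsM, ?_⟩
    rw [mul_assoc]; exact haF h
  rcases val_total hv a (s * x) with h | ⟨t, ht, h⟩
  · exact h
  · obtain ⟨m, hm⟩ := Ideal.mem_span_singleton'.1 h
    by_cases hmM : m ∈ M
    · exfalso
      have ht0 : t ≠ 0 := fun h => ht (h ▸ M.zero_mem)
      have hm0 : m ≠ 0 := by
        rintro rfl
        rw [zero_mul] at hm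
        exact mul_ne_zero ht0 ha0 hm.symm
      have h1 := (mul_mem_scl_iff hs (hspan ha0) hm0).2 hy
      rw [hm, mul_comm t, mul_comm (Ideal.span {m}), mul_mem_scl_iff hs (hspan hm0) ha0] at h1
      apply ht
      have h2 : scl (finTypeOp star) M = M := hM.1.2
      rw [← h2]
      exact (mem_fcl hs hM.1.1).2 ⟨_, hspan hm0, Submodule.fg_span_singleton m,
        (Ideal.span_singleton_le_iff_mem _).2 hmM, h1⟩
    · exact ⟨m, hmM, by rw [hm]; exact Ideal.mul_mem_left _ _ (Ideal.mem_span_singleton_self a)⟩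

theorem scl_local (hs : IsSemistarOperation star) (hD : StarDedekind star) {M : Ideal D}
    (hM : QuasiStarMaximal (finTypeOp star) M) {F : Ideal D} (hF0 : F ≠ ⊥) {x : D}
    (hx : x ∈ scl star F) : ∃ s, s ∉ M ∧ s * x ∈ F := by
  obtain ⟨G, g1, g2, g3, g4⟩ := exists_fg hs hD.1 hF0
  obtain ⟨s, h1, h2⟩ := scl_fg_local hs hD.2 hM g2 g1 (scl_le_of_le hs hF0 g1 g4 hx)
  exact ⟨s, h1, g3 h2⟩

theorem scl_le_qmax (hs : IsSemistarOperation star) (hD : StarDedekind star) {M : Ideal D}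
    (hM : QuasiStarMaximal (finTypeOp star) M) {F : Ideal D} (hF0 : F ≠ ⊥) (h : F ≤ M) :
    scl star F ≤ M := by
  intro x hx
  obtain ⟨s, h1, h2⟩ := scl_local hs hD hM hF0 hx
  exact ((qmax_prime hs hM).mem_or_mem (h h2)).resolve_left h1

theorem comap_ne_bot {M : Ideal D} [M.IsPrime] {J : Ideal (Localization.AtPrime M)} (h : J ≠ ⊥) :
    J.under D ≠ ⊥ := by
  intro h0
  apply h
  rw [← IsLocalization.map_under M.primeCompl _ J, h0, Ideal.map_bot]

theorem good_of_dedekind (hs : IsSemistarOperation star) (hD : StarDedekind star) :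
    GoodLoc star := by
  intro M hp hM
  obtain ⟨_, hv⟩ := hD.2 M hM
  have hnoeth : IsNoetherianRing (Localization.AtPrime M) := by
    refine ⟨fun J => ?_⟩
    by_cases hJ : J = ⊥
    · rw [hJ]; exact Submodule.fg_bot
    obtain ⟨G, g1, g2, g3, g4⟩ := exists_fg hs hD.1 (comap_ne_bot hJ)
    have : J = lm M G := by
      refine le_antisymm ?_ ?_
      · conv_lhs => rw [← IsLocalization.map_under M.primeCompl _ J]
        exact lm_le_iff.2 fun x hx => scl_fg_local hs hD.2 hM g2 g1 (g4 hx)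
      · exact Ideal.map_le_iff_le_comap.2 g3
    rw [this]
    exact Ideal.FG.map g2 _
  have hnf : ¬ IsField (Localization.AtPrime M) := by
    rw [isField_iff_maximalIdeal_eq, ← lm_self]
    exact lm_ne_bot hM.1.1
  exact ((IsDiscreteValuationRing.TFAE (Localization.AtPrime M) hnf).out 0 1).2 hv

theorem fc_of_dedekind (hs : IsSemistarOperation star) (hD : StarDedekind star) :
    StarFiniteCharacter star := by
  have wf := wf_of_noeth hD.1
  have hg := good_of_dedekind hs hD
  have key : ∀ J : {J : Ideal D // QuasiStarIdeal star J},
      {M : Ideal D | QuasiStarMaximal (finTypeOp star) M ∧ J.1 ≤ M}.Finite := by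
    intro J
    induction J using wf.wf.induction with
    | _ J ih =>
    by_cases ht : J.1 = ⊤
    · convert Set.finite_empty
      ext M
      simp only [Set.mem_ofPred_eq, Set.mem_empty_iff_false, iff_false]
      rintro ⟨h1, h2⟩
      rw [ht] at h2
      exact h1.2.1 (top_le_iff.1 h2)
    by_cases hJp : J.1.IsPrime
    · refine (Set.finite_singleton J.1).subset ?_
      rintro M ⟨h1, h2⟩
      have := qmax_prime hs h1
      have := hg M h1
      exact (prime_eq hJp J.2.1 h2).symm
    · have : ∃ a b, a * b ∈ J.1 ∧ a ∉ J.1 ∧ b ∉ J.1 := by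
        by_contra! hc
        exact hJp ⟨ht, fun {a b} h => or_iff_not_imp_left.2 (hc a b h)⟩
      obtain ⟨a, b, hab, ha, hb⟩ := this
      have hlt : ∀ c, c ∉ J.1 → {M : Ideal D | QuasiStarMaximal (finTypeOp star) M ∧
          J.1 ≤ M ∧ c ∈ M}.Finite := by
        intro c hc
        have h0 : J.1 ⊔ Ideal.span {c} ≠ ⊥ := ne_bot_of_le_ne_bot J.2.1 le_sup_left
        refine (ih ⟨_, qsi_scl hs h0⟩ ?_).subset ?_
        · refine lt_of_le_of_ne ?_ ?_
          · exact le_sup_left.trans (le_scl hs h0)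
          · intro he
            apply hc
            rw [he]
            exact le_scl hs h0 (le_sup_right (a := J.1) (Ideal.mem_span_singleton_self c))
        · rintro M ⟨h1, h2, h3⟩
          exact ⟨h1, scl_le_qmax hs hD h1 h0
            (sup_le h2 ((Ideal.span_singleton_le_iff_mem _).2 h3))⟩
      refine ((hlt a ha).union (hlt b hb)).subset ?_
      rintro M ⟨h1, h2⟩
      rcases (qmax_prime hs h1).mem_or_mem (h2 hab) with h | h
      · exact Or.inl ⟨h1, h2, h⟩
      · exact Or.inr ⟨h1, h2, h⟩
  intro d hd
  have hd0 : Ideal.span {d} ≠ ⊥ := by simpa using hd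
  refine (key ⟨_, qsi_scl hs hd0⟩).subset ?_
  rintro M ⟨h1, h2⟩
  exact ⟨h1, scl_le_qmax hs hD h1 hd0 ((Ideal.span_singleton_le_iff_mem _).2 h2)⟩

theorem fc_ideal (hf : StarFiniteCharacter star) {I : Ideal D} (h : I ≠ ⊥) :
    {M : Ideal D | QuasiStarMaximal (finTypeOp star) M ∧ I ≤ M}.Finite := by
  obtain ⟨a, ha, ha0⟩ := Submodule.exists_mem_ne_zero_of_ne_bot h
  exact (hf a ha0).subset fun M hM => ⟨hM.1, hM.2 ha⟩

theorem dedekind_of_good (hs : IsSemistarOperation star) (hg : GoodLoc star)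
    (hf : StarFiniteCharacter star) : StarDedekind star := by
  constructor
  · intro c hc
    have hS := fc_ideal hf (hc 0).1
    have h1 : ∀ M : Ideal D, QuasiStarMaximal (finTypeOp star) M →
        ∃ n, ∀ m, n ≤ m → ∀ x ∈ c m, ∃ s, s ∉ M ∧ s * x ∈ c n := by
      intro M hM
      have hp := qmax_prime hs hM
      have := hg M hM
      obtain ⟨n, hn⟩ := monotone_stabilizes_iff_noetherian.2
        (inferInstance : IsNoetherian (Localization.AtPrime M) (Localization.AtPrime M))
        ⟨fun k => lm M (c k), fun i j hij => Ideal.map_mono (c.monotone hij)⟩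
      exact ⟨n, fun m hm => lm_le_iff.1 (hn m hm).ge⟩
    choose! N hN using h1
    refine ⟨hS.toFinset.sup N, fun m hm => le_antisymm (fun x hx => ?_) (c.monotone hm)⟩
    refine mem_of_local hs (hc _) fun M hM => ?_
    by_cases h0 : c 0 ≤ M
    · have hle : N M ≤ hS.toFinset.sup N := Finset.le_sup (f := N) (by simpa using ⟨hM, h0⟩)
      obtain ⟨s, h2, h3⟩ := hN M hM m (hle.trans hm) x hx
      exact ⟨s, h2, c.monotone hle h3⟩
    · obtain ⟨s, h2, h3⟩ := SetLike.not_le_iff_exists.1 h0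
      exact ⟨s, h3, c.monotone (Nat.zero_le _) (Ideal.mul_mem_right _ _ h2)⟩
  · intro M hp hM
    have := hg M hM
    exact ⟨inferInstance, inferInstance⟩

theorem lm_map_prod {M : Ideal D} [M.IsPrime] {n : ℕ} (P : Fin n → Ideal D) :
    Ideal.map (algebraMap D (Localization.AtPrime M)) (∏ j, P j) =
      ∏ j, Ideal.map (algebraMap D (Localization.AtPrime M)) (P j) :=
  map_prod (Ideal.mapHom (algebraMap D (Localization.AtPrime M))) P Finset.univ

theorem lm_prod_top {M : Ideal D} [M.IsPrime] {n : ℕ} {P : Fin n → Ideal D} {e : Fin n → ℕ}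
    (h : ∀ j, ¬ P j ≤ M) : lm M (∏ j, P j ^ e j) = ⊤ := by
  rw [lm, lm_map_prod, ← Ideal.one_eq_top]
  refine Finset.prod_eq_one fun j _ => ?_
  rw [Ideal.map_pow, show Ideal.map (algebraMap D (Localization.AtPrime M)) (P j) = ⊤ from
      lm_eq_top_iff.2 (h j), ← Ideal.one_eq_top, one_pow]

theorem lm_prod {M : Ideal D} [M.IsPrime] {n : ℕ} {P : Fin n → Ideal D} {e : Fin n → ℕ}
    (i : Fin n) (h : ∀ j, j ≠ i → ¬ P j ≤ M) : lm M (∏ j, P j ^ e j) = lm M (P i) ^ e i := by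
  rw [lm, lm_map_prod, Finset.prod_eq_single i, Ideal.map_pow]
  · intro j _ hj
    rw [Ideal.map_pow, show Ideal.map (algebraMap D (Localization.AtPrime M)) (P j) = ⊤ from
      lm_eq_top_iff.2 (h j hj), ← Ideal.one_eq_top, one_pow]
  · simp

/-- the factorization property -/
def FactProp (star : Submodule D K → Submodule D K) : Prop := ∀ I : Ideal D, I ≠ ⊥ →
        ∃ (n : ℕ) (P : Fin n → Ideal D) (e : Fin n → ℕ),
          (∀ i, QuasiStarPrime (finTypeOp star) (P i)) ∧
          (∀ i j, i ≠ j →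
            finTypeOp star (idealExt K (P i + P j)) = finTypeOp star (1 : Submodule D K)) ∧
          stableOp star (idealExt K I) = stableOp star (idealExt K (∏ i, P i ^ e i))

theorem comax_not_le (hs : IsSemistarOperation star) {M P Q : Ideal D}
    (hM : QuasiStarMaximal (finTypeOp star) M) (hP : P ≠ ⊥)
    (h : finTypeOp star (idealExt K (P + Q)) = finTypeOp star (1 : Submodule D K))
    (h1 : P ≤ M) (h2 : Q ≤ M) : False :=
  (comax_iff hs (ne_bot_of_le_ne_bot hP (le_sup_left (b := Q)))).1 h M hM (sup_le h1 h2)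

theorem good_of_fact (hs : IsSemistarOperation star) (hfp : FactProp star) : GoodLoc star := by
  intro M hp hM
  refine aux_dvr (by rw [← lm_self]; exact lm_ne_bot hM.1.1) fun J hJ => ?_
  obtain ⟨n, P, e, h1, h2, h3⟩ := hfp _ (comap_ne_bot hJ)
  have h4 := (stable_eq_iff hs).1 h3 M hM
  rw [lm, IsLocalization.map_under M.primeCompl] at h4
  by_cases h : ∃ i, P i ≤ M
  · obtain ⟨i, hi⟩ := h
    refine ⟨lm M (P i), e i, lm_prime (h1 i).1 hi, ?_⟩
    rw [h4]
    exact lm_prod i fun j hj hjM => comax_not_le hs hM (h1 j).2.1 (h2 j i hj) hjM hi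
  · push Not at h
    refine ⟨maximalIdeal _, 0, inferInstance, ?_⟩
    rw [h4, lm_prod_top h, pow_zero, Ideal.one_eq_top]

theorem fc_of_fact (hs : IsSemistarOperation star) (hfp : FactProp star) :
    StarFiniteCharacter star := by
  intro d hd
  obtain ⟨n, P, e, h1, h2, h3⟩ := hfp (Ideal.span {d}) (by simpa using hd)
  refine (Set.finite_range P).subset ?_
  rintro M ⟨hM, hdM⟩
  have hp := qmax_prime hs hM
  have := good_of_fact hs hfp M hM
  have h4 := (stable_eq_iff hs).1 h3 M hM
  by_contra hc
  have h5 : ∀ j, ¬ P j ≤ M := fun j hj => hc ⟨j, prime_eq (h1 j).1 (h1 j).2.1 hj⟩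
  rw [lm_prod_top h5, lm_eq_top_iff] at h4
  exact h4 ((Ideal.span_singleton_le_iff_mem _).2 hdM)

theorem qmax_eq {M N : Ideal D}
    (hM : QuasiStarMaximal (finTypeOp star) M) (hN : QuasiStarMaximal (finTypeOp star) N)
    (h : M ≤ N) : M = N := (hM.2.2 N hN.1 hN.2.1 h).symm

theorem strong_fact (hs : IsSemistarOperation star) (hg : GoodLoc star)
    (hf : StarFiniteCharacter star) {I : Ideal D} (hI : I ≠ ⊥) :
    ∃ (n : ℕ) (P : Fin n → Ideal D) (e : Fin n → ℕ),
      (∀ i, QuasiStarMaximal (finTypeOp star) (P i)) ∧ Function.Injective P ∧ (∀ i, 1 ≤ e i) ∧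
      stableOp star (idealExt K I) = stableOp star (idealExt K (∏ i, P i ^ e i)) := by
  have hS := fc_ideal hf hI
  let S := hS.toFinset
  let P : Fin S.card → Ideal D := fun i => (S.equivFin.symm i).1
  have hPS : ∀ i, QuasiStarMaximal (finTypeOp star) (P i) ∧ I ≤ P i := fun i =>
    hS.mem_toFinset.1 (S.equivFin.symm i).2
  have hinj : Function.Injective P := Subtype.val_injective.comp S.equivFin.symm.injective
  have hex : ∀ i, ∃ k : ℕ, 1 ≤ k ∧ ∀ [(P i).IsPrime], lm (P i) I = lm (P i) (P i) ^ k := by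
    intro i
    have hp := qmax_prime hs (hPS i).1
    have := hg (P i) (hPS i).1
    obtain ⟨k, hk⟩ := exists_maximalIdeal_pow_eq_of_principal (Localization.AtPrime (P i))
      (IsPrincipalIdealRing.principal _) (lm (P i) I) (lm_ne_bot hI)
    refine ⟨k, ?_, ?_⟩
    · rw [Nat.one_le_iff_ne_zero]
      rintro rfl
      rw [pow_zero, Ideal.one_eq_top, lm_eq_top_iff] at hk
      exact hk (hPS i).2
    · intro _; rw [lm_self]; exact hk
  choose e he1 he2 using hex
  refine ⟨S.card, P, e, fun i => (hPS i).1, hinj, he1, (stable_eq_iff hs).2 fun M hp hM => ?_⟩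
  by_cases hIM : I ≤ M
  · have hMS : M ∈ S := by simpa [S] using ⟨hM, hIM⟩
    obtain ⟨i, rfl⟩ : ∃ i, M = P i := ⟨S.equivFin ⟨M, hMS⟩, by simp [P]⟩
    rw [he2 i, lm_prod i]
    intro j hj hle
    exact hj (hinj (qmax_eq (hPS j).1 hM hle))
  · rw [lm_eq_top_iff.2 hIM, lm_prod_top]
    exact fun j hj => hIM ((hPS j).2.trans hj)

theorem fact_props (hs : IsSemistarOperation star) {I : Ideal D}
    {n : ℕ} {P : Fin n → Ideal D} {e : Fin n → ℕ}
    (h1 : ∀ i, QuasiStarMaximal (finTypeOp star) (P i)) (h2 : Function.Injective P)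
    (h3 : ∀ i, 1 ≤ e i)
    (h4 : stableOp star (idealExt K I) = stableOp star (idealExt K (∏ i, P i ^ e i))) :
    (∀ M, (∃ i, P i = M) ↔ (QuasiStarMaximal (finTypeOp star) M ∧ I ≤ M)) ∧
    (∀ i, ∀ M, P i = M → ∀ [M.IsPrime],
      lm M I = maximalIdeal (Localization.AtPrime M) ^ e i) := by
  have key : ∀ i, ∀ M, P i = M → ∀ [M.IsPrime],
      lm M I = maximalIdeal (Localization.AtPrime M) ^ e i := by
    rintro i M rfl hp
    rw [(stable_eq_iff hs).1 h4 _ (h1 i), lm_prod i, lm_self]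
    intro j hj hle
    exact hj (h2 (qmax_eq (h1 j) (h1 i) hle))
  refine ⟨fun M => ⟨?_, ?_⟩, key⟩
  · rintro ⟨i, rfl⟩
    refine ⟨h1 i, ?_⟩
    have hp := qmax_prime hs (h1 i)
    by_contra hc
    have h5 := key i _ rfl
    rw [lm_eq_top_iff.2 hc] at h5
    have h6 : (⊤ : Ideal (Localization.AtPrime (P i))) ≤ maximalIdeal _ :=
      h5.le.trans (Ideal.pow_le_self (by have := h3 i; omega))
    exact (maximalIdeal.isMaximal _).ne_top (top_le_iff.1 h6)
  · rintro ⟨hM, hIM⟩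
    have hp := qmax_prime hs hM
    by_contra hc
    have h5 := (stable_eq_iff hs).1 h4 M hM
    rw [lm_prod_top, lm_eq_top_iff] at h5
    · exact h5 hIM
    · exact fun j hj => hc ⟨j, qmax_eq (h1 j) hM hj⟩

theorem comax_of_ne (hs : IsSemistarOperation star) {M N : Ideal D}
    (hM : QuasiStarMaximal (finTypeOp star) M) (hN : QuasiStarMaximal (finTypeOp star) N)
    (h : M ≠ N) : finTypeOp star (idealExt K (M + N)) = finTypeOp star (1 : Submodule D K) := by
  refine (comax_iff hs (ne_bot_of_le_ne_bot hM.1.1 (le_sup_left (b := N)))).2 fun L hL hle => ?_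
  have hle' : M ⊔ N ≤ L := hle
  exact h ((qmax_eq hM hL (le_sup_left.trans hle')).trans
    (qmax_eq hN hL (le_sup_right.trans hle')).symm)

theorem uniq (hs : IsSemistarOperation star) (hg : GoodLoc star) {I : Ideal D}
    {n : ℕ} {P : Fin n → Ideal D} {e : Fin n → ℕ}
    (h1 : ∀ i, QuasiStarMaximal (finTypeOp star) (P i)) (h2 : Function.Injective P)
    (h3 : ∀ i, 1 ≤ e i)
    (h4 : stableOp star (idealExt K I) = stableOp star (idealExt K (∏ i, P i ^ e i)))
    {m : ℕ} {Q : Fin m → Ideal D} {f : Fin m → ℕ}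
    (k1 : ∀ i, QuasiStarMaximal (finTypeOp star) (Q i)) (k2 : Function.Injective Q)
    (k3 : ∀ i, 1 ≤ f i)
    (k4 : stableOp star (idealExt K I) = stableOp star (idealExt K (∏ i, Q i ^ f i))) :
    ∃ σ : Fin m ≃ Fin n, ∀ i, Q i = P (σ i) ∧ f i = e (σ i) := by
  obtain ⟨p1, p2⟩ := fact_props hs h1 h2 h3 h4
  obtain ⟨q1, q2⟩ := fact_props hs k1 k2 k3 k4
  have hex : ∀ i, ∃ j, P j = Q i := fun i => (p1 _).2 ((q1 _).1 ⟨i, rfl⟩)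
  choose σ hσ using hex
  have hb : Function.Bijective σ := by
    refine ⟨fun i j hij => k2 ?_, fun j => ?_⟩
    · rw [← hσ, ← hσ, hij]
    · obtain ⟨i, hi⟩ := (q1 (P j)).2 ((p1 _).1 ⟨j, rfl⟩)
      exact ⟨i, h2 ((hσ i).trans hi)⟩
  refine ⟨Equiv.ofBijective σ hb, fun i => ⟨(hσ i).symm, ?_⟩⟩
  have hp := qmax_prime hs (k1 i)
  have := hg _ (k1 i)
  have h5 := (q2 i _ rfl).symm.trans (p2 (σ i) _ (hσ i))
  refine (Ideal.pow_right_strictAnti (maximalIdeal (Localization.AtPrime (Q i))) ?_ ?_).injective h5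
  · rw [← lm_self]; exact lm_ne_bot (k1 i).1.1
  · exact (maximalIdeal.isMaximal _).ne_top

theorem qmax_qprime (hs : IsSemistarOperation star) {M : Ideal D}
    (hM : QuasiStarMaximal (finTypeOp star) M) : QuasiStarPrime (finTypeOp star) M :=
  ⟨qmax_prime hs hM, hM.1⟩

end GoodLemmas

section Statement

variable {D : Type*} [CommRing D] [IsDomain D]
variable {K : Type*} [Field K] [Algebra D K] [IsFractionRing D K]

/-- `D` an integral domain, `⋆` a semistar operation. `D` is a
⋆-Dedekind domain iff every nonzero ideal `I` of `D` satisfies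
`I^⋆̃ = (P₁^{e₁} ⋯ P_n^{e_n})^⋆̃` for some pairwise ⋆_f-comaximal quasi-⋆_f-prime ideals
`P_i` and nonnegative integers `e_i`. Moreover, if this factorization property holds and
`I^⋆̃ ≠ D^⋆̃`, one may take all `P_i^⋆̃ ≠ D^⋆̃` and all `e_i ≥ 1`, and then the
factorization is unique (up to permutation). -/
theorem starDedekind_iff_factorization_into_primes
    (star : Submodule D K → Submodule D K) (hstar : IsSemistarOperation star) :
    (StarDedekind star ↔
      ∀ I : Ideal D, I ≠ ⊥ →
        ∃ (n : ℕ) (P : Fin n → Ideal D) (e : Fin n → ℕ),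
          (∀ i, QuasiStarPrime (finTypeOp star) (P i)) ∧
          (∀ i j, i ≠ j →
            finTypeOp star (idealExt K (P i + P j)) = finTypeOp star (1 : Submodule D K)) ∧
          stableOp star (idealExt K I) = stableOp star (idealExt K (∏ i, P i ^ e i))) ∧
    ((∀ I : Ideal D, I ≠ ⊥ →
        ∃ (n : ℕ) (P : Fin n → Ideal D) (e : Fin n → ℕ),
          (∀ i, QuasiStarPrime (finTypeOp star) (P i)) ∧
          (∀ i j, i ≠ j →
            finTypeOp star (idealExt K (P i + P j)) = finTypeOp star (1 : Submodule D K)) ∧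
          stableOp star (idealExt K I) = stableOp star (idealExt K (∏ i, P i ^ e i))) →
      ∀ I : Ideal D, I ≠ ⊥ →
        stableOp star (idealExt K I) ≠ stableOp star (1 : Submodule D K) →
        ∃ (n : ℕ) (P : Fin n → Ideal D) (e : Fin n → ℕ),
          (∀ i, QuasiStarPrime (finTypeOp star) (P i)) ∧
          (∀ i j, i ≠ j →
            finTypeOp star (idealExt K (P i + P j)) = finTypeOp star (1 : Submodule D K)) ∧
          (∀ i, stableOp star (idealExt K (P i)) ≠ stableOp star (1 : Submodule D K)) ∧
          (∀ i, 1 ≤ e i) ∧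
          stableOp star (idealExt K I) = stableOp star (idealExt K (∏ i, P i ^ e i)) ∧
          (∀ (m : ℕ) (Q : Fin m → Ideal D) (f : Fin m → ℕ),
            (∀ i, QuasiStarPrime (finTypeOp star) (Q i)) →
            (∀ i j, i ≠ j →
              finTypeOp star (idealExt K (Q i + Q j)) = finTypeOp star (1 : Submodule D K)) →
            (∀ i, stableOp star (idealExt K (Q i)) ≠ stableOp star (1 : Submodule D K)) →
            (∀ i, 1 ≤ f i) →
            stableOp star (idealExt K I) = stableOp star (idealExt K (∏ i, Q i ^ f i)) →
            ∃ σ : Fin m ≃ Fin n, ∀ i, Q i = P (σ i) ∧ f i = e (σ i))) := by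
  have hiff : StarDedekind star ↔ FactProp star := by
    constructor
    · intro hD I hI
      obtain ⟨n, P, e, h1, h2, h3, h4⟩ :=
        strong_fact hstar (good_of_dedekind hstar hD) (fc_of_dedekind hstar hD) hI
      exact ⟨n, P, e, fun i => qmax_qprime hstar (h1 i),
        fun i j hij => comax_of_ne hstar (h1 i) (h1 j) (h2.ne hij), h4⟩
    · intro h
      exact dedekind_of_good hstar (good_of_fact hstar h) (fc_of_fact hstar h)
  refine ⟨hiff, fun hF I hI hne => ?_⟩
  have hg := good_of_fact hstar hF
  obtain ⟨n, P, e, h1, h2, h3, h4⟩ := strong_fact hstar hg (fc_of_fact hstar hF) hI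
  refine ⟨n, P, e, fun i => qmax_qprime hstar (h1 i),
    fun i j hij => comax_of_ne hstar (h1 i) (h1 j) (h2.ne hij),
    fun i => (stable_ne_one_iff hstar).2 ⟨P i, h1 i, le_rfl⟩, h3, h4, ?_⟩
  intro m Q f q1 q2 q3 q4 q5
  have k1 : ∀ i, QuasiStarMaximal (finTypeOp star) (Q i) := by
    intro i
    obtain ⟨M, hM, hle⟩ := (stable_ne_one_iff hstar).1 (q3 i)
    have hp := qmax_prime hstar hM
    have := hg M hM
    rw [prime_eq (q1 i).1 (q1 i).2.1 hle]
    exact hM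
  refine uniq hstar hg h1 h2 h3 h4 k1 (fun i j hij => ?_) q4 q5
  by_contra hne'
  exact comax_not_le hstar (k1 i) (q1 i).2.1 (q2 i j hne') le_rfl hij.ge

end Statement
end
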